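/- Let n ≥ 4. Let G be the graph on vertex set D ∪ U in which a diagonal variable x_{ii} ∈ D and a variable u ∈ U are adjacent if and only if i occurs as a row or column index of u (this graph is a cycle of length 2n whose vertices alternate between D and U). Then the initial ideal in_≺(I_{n-2}) is generated by the squarefree monomials ∏_{v ∈ N} v, where N ranges over all subsets of D ∪ U of cardinality n-2 that contain no edge of G. -/

import Mathlib

open MvPolynomial

/-- The set `D` of diagonal variables `x_{ii}` (0-indexed). -/
def Dset (n : ℕ) : Set (Sym2 (Fin n)) := {v | ∃ i : Fin n, v = s(i, i)}

/-- The set `U` of variables `x_{13}, x_{24}, …, x_{n-2,n}, x_{12}, x_{n-1,n}` (0-indexed). -/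
def Uset (n : ℕ) : Set (Sym2 (Fin n)) :=
  {v | ∃ i j : Fin n, v = s(i, j) ∧
    ((j : ℕ) = (i : ℕ) + 2 ∨ ((i : ℕ) = 0 ∧ (j : ℕ) = 1) ∨
      ((i : ℕ) = n - 2 ∧ (j : ℕ) = n - 1))}

/-- `rank` encodes the linear order on the variables described in the paper:
`x_{11} ≻ … ≻ x_{nn} ≻ x_{13} ≻ … ≻ x_{n-2,n} ≻ x_{12} ≻ x_{n-1,n} ≻ (rest)`,
where a smaller rank means a larger variable. -/
def IsGoodRank (n : ℕ) (rank : Sym2 (Fin n) → ℕ) : Prop :=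
  Function.Injective rank ∧
  (∀ i : Fin n, rank s(i, i) = (i : ℕ)) ∧
  (∀ i j : Fin n, (j : ℕ) = (i : ℕ) + 2 → rank s(i, j) = n + (i : ℕ)) ∧
  (∀ i j : Fin n, (i : ℕ) = 0 → (j : ℕ) = 1 → rank s(i, j) = 2 * n - 2) ∧
  (∀ i j : Fin n, (i : ℕ) = n - 2 → (j : ℕ) = n - 1 → rank s(i, j) = 2 * n - 1) ∧
  (∀ v : Sym2 (Fin n), v ∉ Dset n ∪ Uset n → 2 * n ≤ rank v)

/-- The degree reverse lexicographic order on exponent vectors induced by `rank`: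
`a ≺ b` iff `deg a < deg b`, or the degrees agree and at the `rank`-largest (i.e. smallest)
variable where `a` and `b` differ, `a` has the larger exponent. -/
def DegRevLexLT {n : ℕ} (rank : Sym2 (Fin n) → ℕ) (a b : Sym2 (Fin n) →₀ ℕ) : Prop :=
  (a.sum fun _ e => e) < (b.sum fun _ e => e) ∨
    ((a.sum fun _ e => e) = (b.sum fun _ e => e) ∧
      ∃ v : Sym2 (Fin n), b v < a v ∧ ∀ w : Sym2 (Fin n), rank v < rank w → a w = b w)

/-- `μ` is the leading monomial (exponent vector) of `f` w.r.t. the degrevlex order `≺`. -/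
def IsLeadingMonomial {K : Type*} [Field K] {n : ℕ} (rank : Sym2 (Fin n) → ℕ)
    (f : MvPolynomial (Sym2 (Fin n)) K) (μ : Sym2 (Fin n) →₀ ℕ) : Prop :=
  μ ∈ f.support ∧ ∀ ν ∈ f.support, ν ≠ μ → DegRevLexLT rank ν μ

/-- The minor `[a_1,…,a_s | b_1,…,b_s]` of the generic symmetric matrix `X = (x_{ij})`. -/
noncomputable def symMinor (K : Type*) [Field K] {n s : ℕ} (a b : Fin s → Fin n) :
    MvPolynomial (Sym2 (Fin n)) K :=
  Matrix.det (Matrix.of fun k l => (MvPolynomial.X s(a k, b l) : MvPolynomial (Sym2 (Fin n)) K))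

/-- The ideal `I_t` of `S` generated by all `t × t` minors of the generic symmetric
matrix `X`. -/
noncomputable def minorsIdeal (K : Type*) [Field K] (n t : ℕ) :
    Ideal (MvPolynomial (Sym2 (Fin n)) K) :=
  Ideal.span {p | ∃ a b : Fin t → Fin n, StrictMono a ∧ StrictMono b ∧ p = symMinor K a b}

/-- The initial ideal `in_≺(I)`: the ideal generated by the leading monomials of the
nonzero elements of `I`. -/
noncomputable def initialIdeal {K : Type*} [Field K] {n : ℕ} (rank : Sym2 (Fin n) → ℕ)
    (I : Ideal (MvPolynomial (Sym2 (Fin n)) K)) : Ideal (MvPolynomial (Sym2 (Fin n)) K) :=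
  Ideal.span {p | ∃ f ∈ I, f ≠ 0 ∧ ∃ μ : Sym2 (Fin n) →₀ ℕ,
    IsLeadingMonomial rank f μ ∧ p = MvPolynomial.monomial μ 1}

/-- Adjacency in the graph `G` on vertex set `D ∪ U`: a diagonal variable `x_{ii}` and a
variable `u ∈ U` are adjacent iff `i` occurs as a row or column index of `u`. -/
def GAdj (n : ℕ) (v w : Sym2 (Fin n)) : Prop :=
  (∃ i : Fin n, v = s(i, i) ∧ w ∈ Uset n ∧ ∃ j k : Fin n, w = s(j, k) ∧ (i = j ∨ i = k)) ∨
  (∃ i : Fin n, w = s(i, i) ∧ v ∈ Uset n ∧ ∃ j k : Fin n, v = s(j, k) ∧ (i = j ∨ i = k))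

/-!
Number the vertices of the `2n`-cycle `D ∪ U` cyclically.

For `⊇`, `n - 2` independent vertices miss, after a rotation of the cycle, the last two vertices, so
they are the vertices `2 * k + δ k` for a monotone `δ` with values in `{0, 1, 2, 3}`. These are the
main diagonal entries of an `(n - 2)`-minor. Any other term of this minor either contains a variable
outside `D ∪ U`, or replaces variables in `D` by variables in `U`; hence it is smaller.

For `⊆`, let `μ` be the leading monomial of `f ∈ I_{n-2}`, which may be taken homogeneous. If the
support of `μ` has no `n - 2` independent vertices, then a greedy choice of such vertices fails,
which produces a set `Z` of six vertices outside the support: three of `D` and three of `U`,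
alternating around the cycle. Deleting the latter cuts the cycle into three paths on the rows of the
matrix, each rooted at one of the former. Over `K[x]`, the quadratic form
`∑ p, x ^ w p * (y p - x ^ (w (p, parent p) - w p) * y (parent p)) ^ 2`, summed over the non-roots,
has rank `n - 3`, and its entries in `D ∪ U` outside `Z` vanish to the prescribed orders `w`. The
differential of `(Q, T) ↦ Qᵀ * T * Q` there is onto modulo the entries in `Z`, up to a power of
`x`, so Newton iteration perturbs the form to one of rank at most `n - 3` whose entries outside `Z`
all have prescribed orders. All minors of size `n - 2` vanish there, and so does `f`; but if the
orders are `B ^ rank v` with `B` large (and larger still outside `D ∪ U`), then `μ` is the only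
monomial of `f` of minimal order. So some variable of `μ` lies in `Z`, a contradiction.
-/

/-! ### Newton iteration for symmetric matrices -/

theorem exists_sym2_eq {ι R : Type*} {M : Matrix ι ι R} (hM : M.IsSymm) :
    ∃ V : Sym2 ι → R, ∀ p q, V s(p, q) = M p q :=
  ⟨Sym2.lift ⟨M, fun p q => hM.apply q p⟩, fun _ _ => rfl⟩

section LinearAlgebra

variable {R ι J m : Type*} [CommRing R]

open Matrix

theorem det_mul_eq_zero_of_card_lt [IsDomain R] [Fintype J] [Fintype m] [DecidableEq m]
    (A : Matrix m J R) (B : Matrix J m R) (h : Fintype.card J < Fintype.card m) :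
    (A * B).det = 0 := by
  refine det_eq_zero_of_not_linearIndependent_cols fun hli => h.not_ge ?_
  have hinj : Function.Injective (A * B).mulVecLin := mulVec_injective_iff.2 hli
  calc Fintype.card m = (A * B).rank := by
        rw [rank, LinearMap.finrank_range_of_inj hinj, Module.finrank_fintype_fun_eq_card]
    _ ≤ A.rank := rank_mul_le_left A B
    _ ≤ Fintype.card J := rank_le_card_width A

variable [Fintype J]

theorem isSymm_transpose_mul_mul {T : Matrix J J R} (hT : T.IsSymm) (Q : Matrix J ι R) :
    (Qᵀ * T * Q).IsSymm := by
  rw [IsSymm, transpose_mul, transpose_mul, transpose_transpose, hT.eq, Matrix.mul_assoc]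

theorem exists_transpose_mul_mul_eq_add_smul (s : R) (Q₀ Q₁ : Matrix J ι R) (T₀ T₁ : Matrix J J R) :
    ∃ W : Matrix ι ι R,
      (Q₀ + s • Q₁)ᵀ * (T₀ + s • T₁) * (Q₀ + s • Q₁) = Q₀ᵀ * T₀ * Q₀ + s • W := by
  refine ⟨Q₁ᵀ * (T₀ + s • T₁) * (Q₀ + s • Q₁) + Q₀ᵀ * T₁ * (Q₀ + s • Q₁) + Q₀ᵀ * T₀ * Q₁, ?_⟩
  simp only [transpose_add, transpose_smul, Matrix.add_mul, Matrix.mul_add, Matrix.smul_mul,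
    Matrix.mul_smul]
  module

theorem exists_newton_step (s ε : R) (Q₀ Q₁ H : Matrix J ι R) (T₀ T₁ δ : Matrix J J R) :
    ∃ W₁ W₂ : Matrix ι ι R,
      (Q₀ + s • Q₁ + ε • H)ᵀ * (T₀ + s • T₁ + ε • δ) * (Q₀ + s • Q₁ + ε • H) =
        (Q₀ + s • Q₁)ᵀ * (T₀ + s • T₁) * (Q₀ + s • Q₁) +
          ε • (Hᵀ * T₀ * Q₀ + Q₀ᵀ * T₀ * H + Q₀ᵀ * δ * Q₀) + (ε * s) • W₁ + (ε * ε) • W₂ := by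
  refine ⟨Hᵀ * T₁ * (Q₀ + s • Q₁) + Hᵀ * T₀ * Q₁ + (Q₀ + s • Q₁)ᵀ * T₁ * H + Q₁ᵀ * T₀ * H +
      (Q₀ + s • Q₁)ᵀ * δ * Q₁ + Q₁ᵀ * δ * Q₀,
    Hᵀ * (T₀ + s • T₁ + ε • δ) * H + Hᵀ * δ * (Q₀ + s • Q₁) + (Q₀ + s • Q₁)ᵀ * δ * H, ?_⟩
  simp only [transpose_add, transpose_smul, Matrix.add_mul, Matrix.mul_add, Matrix.smul_mul,
    Matrix.mul_smul]
  module

theorem exists_newton_approximation {Z : Set (Sym2 ι)} {e t : R} {Q₀ : Matrix J ι R}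
    {T₀ : Matrix J J R} (hT₀ : T₀.IsSymm) {B : Sym2 ι → R}
    (hlin : ∀ G : Sym2 ι → R, ∃ (H : Matrix J ι R) (δ : Matrix J J R), δ.IsSymm ∧
      ∀ p q, s(p, q) ∉ Z → (Hᵀ * T₀ * Q₀ + Q₀ᵀ * T₀ * H + Q₀ᵀ * δ * Q₀) p q = e * G s(p, q))
    (h₀ : ∀ p q, s(p, q) ∉ Z → e ^ 2 * t ∣ B s(p, q) - (Q₀ᵀ * T₀ * Q₀) p q) (N : ℕ) :
    ∃ (Q₁ : Matrix J ι R) (T₁ : Matrix J J R), T₁.IsSymm ∧ ∀ p q, s(p, q) ∉ Z →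
      e ^ 2 * t ^ (N + 1) ∣ B s(p, q) -
        ((Q₀ + (e * t) • Q₁)ᵀ * (T₀ + (e * t) • T₁) * (Q₀ + (e * t) • Q₁)) p q := by
  induction N with
  | zero => exact ⟨0, 0, isSymm_zero, by simpa using h₀⟩
  | succ N ih =>
    obtain ⟨Q₁, T₁, hT₁, h⟩ := ih
    have hsymm := isSymm_transpose_mul_mul (hT₀.add (hT₁.smul (e * t))) (Q₀ + (e * t) • Q₁)
    have hres : ∀ v : Sym2 ι, ∃ g, ∀ p q, s(p, q) = v → v ∉ Z → B s(p, q) -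
        ((Q₀ + (e * t) • Q₁)ᵀ * (T₀ + (e * t) • T₁) * (Q₀ + (e * t) • Q₁)) p q =
          e ^ 2 * t ^ (N + 1) * g := by
      rintro ⟨p, q⟩
      by_cases hv : s(p, q) ∈ Z
      · exact ⟨0, fun _ _ _ hv' => absurd hv hv'⟩
      obtain ⟨g, hg⟩ := h p q hv
      refine ⟨g, fun p' q' hpq _ => ?_⟩
      rcases Sym2.eq_iff.1 hpq with ⟨rfl, rfl⟩ | ⟨rfl, rfl⟩
      · exact hg
      · rw [← hg, Sym2.eq_swap, hsymm.apply]
    choose G hG using hres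
    obtain ⟨H, δ, hδ, hHδ⟩ := hlin G
    obtain ⟨W₁, W₂, hW⟩ := exists_newton_step (e * t) (e * t ^ (N + 1)) Q₀ Q₁ H T₀ T₁ δ
    refine ⟨Q₁ + t ^ N • H, T₁ + t ^ N • δ, hT₁.add (hδ.smul _), fun p q hpq => ?_⟩
    have hε : e * t * t ^ N = e * t ^ (N + 1) := by ring
    rw [smul_add, smul_add, smul_smul, smul_smul, hε, ← add_assoc, ← add_assoc, hW]
    have hlin := hHδ p q hpq
    simp only [Matrix.add_apply _ _ p q, Matrix.smul_apply _ _ p q, smul_eq_mul] at hlin ⊢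
    refine ⟨-(W₁ p q + t ^ N * W₂ p q), ?_⟩
    linear_combination hG s(p, q) p q rfl hpq - e * t ^ (N + 1) * hlin

theorem exists_tangent_eq_smul {κ : Type*} [Fintype ι] [Fintype κ] [DecidableEq ι] [DecidableEq J]
    {S : Matrix ι J R} {Q : Matrix J ι R} {L : Matrix ι κ R} {P : Matrix κ ι R}
    (hSQ : S * Q + L * P = 1) {T T' : Matrix J J R} {b : R} (hT : T.IsSymm)
    (hTT' : T * T' = b • (1 : Matrix J J R)) {G : Matrix ι ι R} (hG : G.IsSymm)
    (hLG : Lᵀ * G * L = 0) :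
    ∃ (H : Matrix J ι R) (δ : Matrix J J R), δ.IsSymm ∧
      Hᵀ * T * Q + Qᵀ * T * H + Qᵀ * δ * Q = b • G := by
  have hTH : T * (T' * (Sᵀ * G * L * P)) = b • (Sᵀ * G * L * P) := by
    rw [← Matrix.mul_assoc, hTT', Matrix.smul_mul, Matrix.one_mul]
  refine ⟨T' * (Sᵀ * G * L * P), b • (Sᵀ * G * S), (isSymm_transpose_mul_mul hG S).smul b, ?_⟩
  have hHT : (T' * (Sᵀ * G * L * P))ᵀ * T = b • (Pᵀ * Lᵀ * G * S) := by
    rw [← hT.eq, ← transpose_mul, hTH]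
    simp only [transpose_smul, transpose_mul, transpose_transpose, hG.eq, Matrix.mul_assoc]
  calc _ = b • ((S * Q + L * P)ᵀ * G * (S * Q + L * P) - Pᵀ * (Lᵀ * G * L) * P) := by
        rw [hHT, Matrix.mul_assoc Qᵀ, hTH]
        simp only [transpose_add, transpose_mul, Matrix.add_mul, Matrix.mul_add, Matrix.mul_smul,
          Matrix.smul_mul, Matrix.mul_assoc]
        module
    _ = b • G := by rw [hSQ, hLG]; simp

end LinearAlgebra

/-! ### Quadratic forms of rooted forests -/

/-- A forest on the vertex set `ι` whose trees are indexed by `κ`, given by the parent of each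
vertex and its distance to the root of its tree. The vertices of depth `0` are the roots, and the
value of `parent` at a root is irrelevant. -/
structure RootedForest (ι κ : Type*) where
  parent : ι → ι
  depth : ι → ℕ
  tree : ι → κ
  root : κ → ι
  depth_parent : ∀ p, depth p ≠ 0 → depth (parent p) + 1 = depth p
  tree_parent : ∀ p, depth p ≠ 0 → tree (parent p) = tree p
  depth_root : ∀ k, depth (root k) = 0
  tree_root : ∀ k, tree (root k) = k
  eq_root : ∀ p, depth p = 0 → p = root (tree p)

namespace RootedForest

variable {ι κ : Type*} (F : RootedForest ι κ)

theorem exists_potential (c : ι → ℕ) :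
    ∃ h : ι → ℕ, (∀ k, h (F.root k) = 0) ∧
      ∀ p, F.depth p ≠ 0 → h p = c p + h (F.parent p) := by
  refine ⟨fun p => ∑ i ∈ Finset.range (F.depth p), c (F.parent^[i] p), fun k => ?_, fun p hp => ?_⟩
  · simp [F.depth_root]
  · beta_reduce
    rw [← F.depth_parent p hp, Finset.sum_range_succ', add_comm]
    simp only [Function.iterate_succ_apply, Function.iterate_zero_apply]

/-- The vertices of a rooted forest that are not roots; each stands for the edge to its parent. -/
abbrev NonRoot : Type _ := {p : ι // F.depth p ≠ 0}

theorem card_nonRoot [Fintype ι] [Fintype κ] [Fintype F.NonRoot] :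
    Fintype.card F.NonRoot + Fintype.card κ = Fintype.card ι := by
  let roots : κ ≃ {p // ¬F.depth p ≠ 0} :=
    ⟨fun k => ⟨F.root k, not_not.2 (F.depth_root k)⟩, fun p => F.tree p, F.tree_root,
      fun p => Subtype.ext (F.eq_root p (not_not.1 p.2)).symm⟩
  rw [← Fintype.card_sum]
  exact Fintype.card_congr (((Equiv.refl _).sumCongr roots).trans (Equiv.sumCompl _))

theorem eq_of_edge_eq {p q : ι} (hp : F.depth p ≠ 0) (hq : F.depth q ≠ 0)
    (h : s(p, F.parent p) = s(q, F.parent q)) : p = q := by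
  have := F.depth_parent p hp
  have := F.depth_parent q hq
  rcases Sym2.eq_iff.1 h with ⟨h, -⟩ | ⟨h₁, h₂⟩
  · exact h
  · have := congrArg F.depth h₁
    have := congrArg F.depth h₂
    omega

theorem parent_ne {p : ι} (hp : F.depth p ≠ 0) : F.parent p ≠ p := fun h => by
  have := F.depth_parent p hp
  rw [h] at this
  omega

/-- The variables at which the quadratic form attached to a rooted forest has nonzero
coefficients: those of the diagonal and those of the edges. -/
def support : Set (Sym2 ι) := {v | v.IsDiag ∨ ∃ p, F.depth p ≠ 0 ∧ v = s(p, F.parent p)}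

section Coboundary

variable [DecidableEq ι] {R : Type*} [CommRing R] (x : R) (c : ι → ℕ)

open Matrix

/-- The weighted coboundary of a rooted forest: the row of the non-root `p` is
`e_p - x ^ c p • e_{parent p}`. -/
def coboundary : Matrix F.NonRoot ι R :=
  of fun p => Pi.single p.1 1 - Pi.single (F.parent p) (x ^ c p)

variable {c} {h : ι → ℕ}

theorem exists_vecMul_coboundary [Fintype F.NonRoot] (hroot : ∀ k, h (F.root k) = 0)
    (hpot : ∀ p, F.depth p ≠ 0 → h p = c p + h (F.parent p)) (p : ι) :
    ∃ s : F.NonRoot → R, s ᵥ* F.coboundary x c =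
      Pi.single p 1 - Pi.single (F.root (F.tree p)) (x ^ h p) := by
  induction hd : F.depth p generalizing p with
  | zero =>
    refine ⟨0, ?_⟩
    rw [F.eq_root p hd, F.tree_root, hroot, pow_zero, sub_self, zero_vecMul]
  | succ d ih =>
    have hp : F.depth p ≠ 0 := by omega
    have hdp : F.depth (F.parent p) = d := by have := F.depth_parent p hp; omega
    obtain ⟨s, hs⟩ := ih _ hdp
    refine ⟨Pi.single ⟨p, hp⟩ 1 + x ^ c p • s, ?_⟩
    rw [add_vecMul, smul_vecMul, hs, single_one_vecMul, F.tree_parent p hp, hpot p hp, pow_add,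
      smul_sub, ← Pi.single_smul', ← Pi.single_smul', smul_eq_mul, smul_eq_mul, mul_one]
    exact sub_add_sub_cancel (Pi.single p 1 : ι → R) _ _

theorem exists_mul_coboundary_add [Fintype F.NonRoot] [Fintype κ] [DecidableEq κ]
    (hroot : ∀ k, h (F.root k) = 0)
    (hpot : ∀ p, F.depth p ≠ 0 → h p = c p + h (F.parent p)) :
    ∃ (S : Matrix ι F.NonRoot R) (P : Matrix κ ι R),
      S * F.coboundary x c + (of fun p => Pi.single (F.tree p) (x ^ h p)) * P = 1 := by
  choose S hS using F.exists_vecMul_coboundary x hroot hpot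
  refine ⟨of S, of fun k => Pi.single (F.root k) 1, ?_⟩
  ext p q
  have hp : (of S * F.coboundary x c) p q = _ := congrFun (hS p) q
  rw [Matrix.add_apply, hp, mul_apply, Finset.sum_eq_single (F.tree p)] <;>
    simp +contextual [Matrix.one_apply, Pi.single_apply, eq_comm]

theorem coboundary_mul_coboundary_of_ne (k : F.NonRoot) {p q : ι} (hpq : p ≠ q)
    (h : s(k.1, F.parent k) ≠ s(p, q)) : F.coboundary x c k p * F.coboundary x c k q = 0 := by
  simp only [coboundary, of_apply, Pi.sub_apply, Pi.single_apply]
  rw [Ne, Sym2.eq_iff] at h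
  grind

end Coboundary

section Form

variable [DecidableEq ι] {R : Type*} [CommRing R] (x : R) (w : Sym2 ι → ℕ)

open Matrix

/-- Weights on the vertices and edges of a rooted forest for which every edge is strictly heavier
than both of its ends. -/
def IsEdgeHeavy : Prop :=
  ∀ p, F.depth p ≠ 0 → w s(p, p) < w s(p, F.parent p) ∧
    w s(F.parent p, F.parent p) < w s(p, F.parent p)

/-- The difference between the weight of the edge from `p` to its parent and that of `p`. -/
def edgeCost (p : ι) : ℕ := w s(p, F.parent p) - w s(p, p)

variable {w} in
theorem pow_dvd_form_summand (hw : F.IsEdgeHeavy w) {p : ι} {k : F.NonRoot} (hk : k.1 ≠ p) :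
    x ^ (w s(p, p) + 1) ∣ x ^ w s(k.1, k.1) *
      (F.coboundary x (F.edgeCost w) k p * F.coboundary x (F.edgeCost w) k p) := by
  by_cases hkp : F.parent k = p
  · obtain ⟨h₁, h₂⟩ := hw k k.2
    rw [hkp] at h₁ h₂
    have : w s(p, p) + 1 ≤ w s(k.1, k.1) + (F.edgeCost w k + F.edgeCost w k) := by
      simp only [edgeCost, hkp]
      omega
    simpa [coboundary, hkp, hk.symm, ← pow_add] using pow_dvd_pow x this
  · simp [coboundary, Ne.symm hkp, hk.symm]

variable [Fintype F.NonRoot]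

/-- The Gram matrix of the quadratic form
`∑ p, x ^ w s(p, p) * (y p - x ^ edgeCost p * y (parent p)) ^ 2`, summed over the non-roots. -/
def form : Matrix ι ι R :=
  (F.coboundary x (F.edgeCost w))ᵀ * diagonal (fun p : F.NonRoot => x ^ w s(p.1, p.1)) *
    F.coboundary x (F.edgeCost w)

theorem isSymm_form : (F.form x w).IsSymm :=
  isSymm_transpose_mul_mul (isSymm_diagonal _) _

theorem form_apply (p q : ι) : F.form x w p q = ∑ k : F.NonRoot, x ^ w s(k.1, k.1) *
    (F.coboundary x (F.edgeCost w) k p * F.coboundary x (F.edgeCost w) k q) := by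
  simp only [form, mul_apply (N := F.coboundary _ _), mul_diagonal, transpose_apply]
  exact Finset.sum_congr rfl fun k _ => by ring

theorem form_eq_zero {p q : ι} (h : s(p, q) ∉ F.support) : F.form x w p q = 0 := by
  rw [form_apply]
  refine Finset.sum_eq_zero fun k _ => ?_
  rw [F.coboundary_mul_coboundary_of_ne x k, mul_zero]
  · exact fun hpq => h (Or.inl hpq)
  · exact fun hk => h (Or.inr ⟨k, k.2, hk.symm⟩)

variable {w}

theorem form_edge (hw : F.IsEdgeHeavy w) {p : ι} (hp : F.depth p ≠ 0) :
    F.form x w p (F.parent p) = -x ^ w s(p, F.parent p) := by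
  have hne := F.parent_ne hp
  rw [form_apply, Finset.sum_eq_single ⟨p, hp⟩]
  · have : w s(p, p) + F.edgeCost w p = w s(p, F.parent p) :=
      Nat.add_sub_of_le (hw p hp).1.le
    simp [coboundary, hne, hne.symm, ← pow_add, this]
  · intro k _ hk
    rw [F.coboundary_mul_coboundary_of_ne x k hne.symm, mul_zero]
    exact fun h => hk (Subtype.ext (F.eq_of_edge_eq k.2 hp h))
  · simp

theorem pow_dvd_form_root (hw : F.IsEdgeHeavy w) {p : ι} (hp : F.depth p = 0) :
    x ^ (w s(p, p) + 1) ∣ F.form x w p p := by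
  rw [form_apply]
  exact Finset.dvd_sum fun k _ =>
    F.pow_dvd_form_summand x hw fun hk => k.2 (hk ▸ hp)

theorem pow_dvd_form_sub_pow (hw : F.IsEdgeHeavy w) {p : ι} (hp : F.depth p ≠ 0) :
    x ^ (w s(p, p) + 1) ∣ F.form x w p p - x ^ w s(p, p) := by
  have hself : F.coboundary x (F.edgeCost w) ⟨p, hp⟩ p = 1 := by
    simp [coboundary, (F.parent_ne hp).symm]
  rw [form_apply, ← Finset.add_sum_erase _ _ (Finset.mem_univ (⟨p, hp⟩ : F.NonRoot)), hself,
    mul_one, mul_one, add_sub_cancel_left]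
  exact Finset.dvd_sum fun k hk =>
    F.pow_dvd_form_summand x hw fun h => Finset.ne_of_mem_erase hk (Subtype.ext h)

theorem pow_dvd_form (hw : F.IsEdgeHeavy w) (p q : ι) : x ^ w s(p, q) ∣ F.form x w p q := by
  by_cases hpq : s(p, q) ∈ F.support
  · rcases hpq with hpq | ⟨r, hr, hpq⟩
    · obtain rfl : p = q := hpq
      have hle := pow_dvd_pow x (Nat.le_succ (w s(p, p)))
      by_cases hp : F.depth p = 0
      · exact hle.trans (F.pow_dvd_form_root x hw hp)
      · exact (dvd_sub_self_right).1 (hle.trans (F.pow_dvd_form_sub_pow x hw hp))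
    · rcases Sym2.eq_iff.1 hpq with ⟨rfl, rfl⟩ | ⟨rfl, rfl⟩
      · rw [F.form_edge x hw hr, dvd_neg]
      · rw [(F.isSymm_form x w).apply, F.form_edge x hw hr, dvd_neg, Sym2.eq_swap]
  · rw [F.form_eq_zero x w hpq]
    exact dvd_zero _

end Form

end RootedForest

namespace RootedForest

variable {ι κ : Type*} (F : RootedForest ι κ)

/-- A set `Z` of variables of a symmetric matrix is transversal to a rooted forest if it contains
the diagonal variables of the roots and meets each pair of trees (possibly twice the same tree)
exactly once. -/
structure IsTransversal (Z : Set (Sym2 ι)) : Prop where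
  root_mem : ∀ k, s(F.root k, F.root k) ∈ Z
  existsUnique : ∀ k l, ∃! pq : ι × ι, F.tree pq.1 = k ∧ F.tree pq.2 = l ∧ s(pq.1, pq.2) ∈ Z

variable {F} {Z : Set (Sym2 ι)}

section Linearization

variable {R : Type*} [CommRing R] (x : R)

open Matrix

theorem IsTransversal.exists_correction [Fintype ι] [DecidableEq κ] {h : ι → ℕ} {a : ℕ}
    (hZ : F.IsTransversal Z) (ha : ∀ p q, h p + h q ≤ a) {Γ : Matrix κ κ R} (hΓ : Γ.IsSymm) :
    ∃ C : Matrix ι ι R, C.IsSymm ∧ (∀ p q, s(p, q) ∉ Z → C p q = 0) ∧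
      (of fun p => Pi.single (F.tree p) (x ^ h p))ᵀ * C *
        (of fun p => Pi.single (F.tree p) (x ^ h p)) = x ^ a • Γ := by
  classical
  refine ⟨of fun p q => if s(p, q) ∈ Z then x ^ (a - (h p + h q)) * Γ (F.tree p) (F.tree q) else 0,
    ?_, fun p q hpq => by simp [hpq], ?_⟩
  · ext p q
    rw [transpose_apply, of_apply, of_apply, Sym2.eq_swap, hΓ.apply, add_comm (h q)]
  ext k l
  obtain ⟨⟨p, q⟩, ⟨rfl, rfl, hpq⟩, huniq⟩ := hZ.existsUnique k l
  simp only [mul_apply, Finset.sum_mul, transpose_apply, of_apply]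
  rw [Finset.sum_comm, ← Fintype.sum_prod_type', Finset.sum_eq_single (p, q)]
  · simp only [Pi.single_eq_same, if_pos hpq, Matrix.smul_apply, smul_eq_mul]
    rw [← Nat.sub_add_cancel (ha p q)]
    simp only [Nat.add_sub_cancel]
    ring
  · rintro ⟨p', q'⟩ - hne
    by_contra hterm
    have hp' : F.tree p = F.tree p' := by by_contra hp'; simp [hp'] at hterm
    have hq' : F.tree q = F.tree q' := by by_contra hq'; simp [hq'] at hterm
    exact hne (huniq _ ⟨hp'.symm, hq'.symm, by by_contra hZ'; simp [hZ'] at hterm⟩)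
  · simp

variable [DecidableEq ι] [Fintype F.NonRoot]

theorem IsTransversal.exists_linearization [Finite ι] (hZ : F.IsTransversal Z) (c d : ι → ℕ) :
    ∃ e : ℕ, ∀ G : Sym2 ι → R, ∃ (H : Matrix F.NonRoot ι R) (δ : Matrix F.NonRoot F.NonRoot R),
      δ.IsSymm ∧ ∀ p q, s(p, q) ∉ Z →
        (Hᵀ * diagonal (fun k : F.NonRoot => x ^ d k) * F.coboundary x c +
          (F.coboundary x c)ᵀ * diagonal (fun k : F.NonRoot => x ^ d k) * H +
          (F.coboundary x c)ᵀ * δ * F.coboundary x c) p q = x ^ e * G s(p, q) := by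
  classical
  have : Fintype ι := Fintype.ofFinite ι
  have : Fintype κ :=
    @Fintype.ofFinite κ (Finite.of_injective F.root (Function.LeftInverse.injective F.tree_root))
  obtain ⟨h, hroot, hpot⟩ := F.exists_potential c
  obtain ⟨S, P, hSP⟩ := F.exists_mul_coboundary_add x hroot hpot
  obtain ⟨a, ha⟩ : ∃ a, ∀ p, h p ≤ a := Finite.exists_le h
  obtain ⟨b, hb⟩ : ∃ b, ∀ p, d p ≤ b := Finite.exists_le d
  refine ⟨b + 2 * a, fun G => ?_⟩
  set L : Matrix ι κ R := of fun p => Pi.single (F.tree p) (x ^ h p)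
  have hG : (of fun p q => G s(p, q) : Matrix ι ι R).IsSymm := by ext p q; simp [Sym2.eq_swap]
  obtain ⟨C, hC, hCZ, hLC⟩ := hZ.exists_correction x (h := h) (a := 2 * a)
    (fun p q => by have := ha p; have := ha q; omega) (isSymm_transpose_mul_mul hG L)
  obtain ⟨H, δ, hδ, hH⟩ := exists_tangent_eq_smul hSP
    (T' := diagonal fun k : F.NonRoot => x ^ (b - d k)) (b := x ^ b)
    (isSymm_diagonal fun k : F.NonRoot => x ^ d k)
    (by simp [diagonal_mul_diagonal, ← pow_add, hb, ← smul_one_eq_diagonal])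
    ((hG.smul (x ^ (2 * a))).sub hC)
    (by rw [Matrix.mul_sub, Matrix.sub_mul, hLC, Matrix.mul_smul, Matrix.smul_mul, sub_self])
  refine ⟨H, δ, hδ, fun p q hpq => ?_⟩
  rw [hH]
  simp [hCZ p q hpq, pow_add, mul_assoc]

theorem IsTransversal.exists_approximation [Fintype ι] [Fintype κ] [IsDomain R]
    {w : Sym2 ι → ℕ} (hZ : F.IsTransversal Z) (τ : ℕ) :
    ∃ m, ∀ B : Sym2 ι → R, (∀ p q, s(p, q) ∉ Z → x ^ m ∣ B s(p, q) - F.form x w p q) →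
      ∀ N, ∃ V : Sym2 ι → R, (∀ p q, x ^ τ ∣ V s(p, q) - F.form x w p q) ∧
        (∀ v ∉ Z, x ^ N ∣ B v - V v) ∧
        ∀ s, Fintype.card ι < s + Fintype.card κ → ∀ a b : Fin s → ι,
          (of fun k l => V s(a k, b l)).det = 0 := by
  obtain ⟨e, he⟩ := hZ.exists_linearization x (F.edgeCost w) fun p => w s(p, p)
  refine ⟨2 * e + (τ + 1), fun B hB N => ?_⟩
  obtain ⟨Q₁, T₁, hT₁, hres⟩ := exists_newton_approximation (t := x ^ (τ + 1))
    (isSymm_diagonal fun k : F.NonRoot => x ^ w s(k.1, k.1)) he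
    (fun p q hpq => by rw [← pow_mul, ← pow_add, mul_comm e]; exact hB p q hpq) N
  obtain ⟨W, hW⟩ := exists_transpose_mul_mul_eq_add_smul (x ^ e * x ^ (τ + 1))
    (F.coboundary x (F.edgeCost w)) Q₁ (diagonal fun k : F.NonRoot => x ^ w s(k.1, k.1)) T₁
  set Q := F.coboundary x (F.edgeCost w) + (x ^ e * x ^ (τ + 1)) • Q₁
  set T := diagonal (fun k : F.NonRoot => x ^ w s(k.1, k.1)) + (x ^ e * x ^ (τ + 1)) • T₁
  have hT : T.IsSymm := (isSymm_diagonal _).add (hT₁.smul _)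
  obtain ⟨V, hV⟩ := exists_sym2_eq (isSymm_transpose_mul_mul hT Q)
  refine ⟨V, fun p q => ?_, fun v hv => ?_, fun s hs a b => ?_⟩
  · rw [hV, hW, form, Matrix.add_apply, add_sub_cancel_left, Matrix.smul_apply, smul_eq_mul,
      ← pow_add]
    exact (pow_dvd_pow x (by omega)).mul_right _
  · induction v with | _ p q
    rw [hV]
    refine (pow_dvd_pow x ?_).trans
      (((pow_mul x (τ + 1) (N + 1)).dvd.mul_left _).trans (hres p q hv))
    nlinarith
  · have hVab : (of fun k l => V s(a k, b l)) = (Qᵀ * T).submatrix a id * Q.submatrix id b := by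
      ext k l
      exact hV _ _
    have := F.card_nonRoot
    rw [hVab]
    exact det_mul_eq_zero_of_card_lt _ _ (by rw [Fintype.card_fin]; omega)

end Linearization

end RootedForest

/-! ### Curves in a symmetric determinantal variety -/

section Curve

open scoped Polynomial

variable {ι κ K : Type*} [Field K] {F : RootedForest ι κ} {Z : Set (Sym2 ι)} {w₀ : Sym2 ι → ℕ}

theorem coeff_eq_of_X_pow_dvd_sub {f g : K[X]} {N d : ℕ} (h : Polynomial.X ^ N ∣ f - g)
    (hd : d < N) : f.coeff d = g.coeff d :=
  sub_eq_zero.1 ((Polynomial.coeff_sub f g d).symm.trans (Polynomial.X_pow_dvd_iff.1 h d hd))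

namespace RootedForest

theorem IsTransversal.coeff_form_ne_zero [DecidableEq ι] [Fintype F.NonRoot]
    (hZ : F.IsTransversal Z) (hw : F.IsEdgeHeavy w₀) {p q : ι} (hpq : s(p, q) ∈ F.support)
    (hpqZ : s(p, q) ∉ Z) :
    (F.form (Polynomial.X : K[X]) w₀ p q).coeff (w₀ s(p, q)) ≠ 0 := by
  rcases hpq with hpq | ⟨r, hr, hpq⟩
  · obtain rfl : p = q := hpq
    have hp : F.depth p ≠ 0 := fun hp => hpqZ <| by
      rw [F.eq_root p hp]
      exact hZ.root_mem _
    rw [coeff_eq_of_X_pow_dvd_sub (F.pow_dvd_form_sub_pow _ hw hp) (Nat.lt_succ_self _)]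
    simp
  · have hr' :
        (F.form (Polynomial.X : K[X]) w₀ r (F.parent r)).coeff (w₀ s(r, F.parent r)) ≠ 0 := by
      simp [F.form_edge _ hw hr]
    rcases Sym2.eq_iff.1 hpq with ⟨rfl, rfl⟩ | ⟨rfl, rfl⟩
    · exact hr'
    · rwa [(F.isSymm_form _ _).apply, Sym2.eq_swap]

theorem IsTransversal.exists_curve [Fintype ι] [Fintype κ] (hZ : F.IsTransversal Z)
    (hw₀ : F.IsEdgeHeavy w₀) :
    ∃ m, ∀ w : Sym2 ι → ℕ, (∀ v ∈ F.support ∪ Z, w v = w₀ v) → (∀ v ∉ F.support ∪ Z, m ≤ w v) →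
      ∃ V : Sym2 ι → K[X], (∀ v, Polynomial.X ^ w v ∣ V v) ∧
        (∀ v ∉ Z, (V v).coeff (w v) ≠ 0) ∧
        ∀ s, Fintype.card ι < s + Fintype.card κ → ∀ a b : Fin s → ι,
          (Matrix.of fun k l => V s(a k, b l)).det = 0 := by
  classical
  let x : K[X] := Polynomial.X
  obtain ⟨V₀, hV₀⟩ := exists_sym2_eq (F.isSymm_form x w₀)
  obtain ⟨τ, hτ⟩ := Finite.exists_le w₀
  obtain ⟨m, hm⟩ := hZ.exists_approximation x (w := w₀) τ
  refine ⟨m, fun w hwS hwm => ?_⟩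
  obtain ⟨N, hN⟩ := Finite.exists_le w
  let B : Sym2 ι → K[X] := fun v => if v ∈ F.support ∪ Z then V₀ v else x ^ w v
  have hB : ∀ p q, s(p, q) ∉ Z → x ^ m ∣ B s(p, q) - F.form x w₀ p q := fun p q _ => by
    by_cases hS : s(p, q) ∈ F.support ∪ Z
    · simp only [B, if_pos hS, hV₀, sub_self, dvd_zero]
    · rw [F.form_eq_zero x w₀ fun h => hS (Or.inl h), sub_zero]
      simpa only [B, if_neg hS] using pow_dvd_pow x (hwm _ hS)
  obtain ⟨V, hVform, hVB, hVdet⟩ := hm B hB (N + 1)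
  have hVV₀ : ∀ v, x ^ τ ∣ V v - V₀ v := Sym2.ind fun p q => hV₀ p q ▸ hVform p q
  have hV₀dvd : ∀ v ∈ F.support ∪ Z, x ^ w v ∣ V₀ v := Sym2.ind fun p q hS => by
    rw [hV₀, hwS _ hS]
    exact F.pow_dvd_form x hw₀ p q
  have hBdvd : ∀ v, x ^ w v ∣ B v := fun v => by
    by_cases hS : v ∈ F.support ∪ Z
    · simpa only [B, if_pos hS] using hV₀dvd v hS
    · simp only [B, if_neg hS, dvd_refl]
  have hBcoeff : ∀ v ∉ Z, (B v).coeff (w v) ≠ 0 := Sym2.ind fun p q hpq => by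
    by_cases hS : s(p, q) ∈ F.support ∪ Z
    · simp only [B, if_pos hS, hV₀, hwS _ hS]
      exact hZ.coeff_form_ne_zero hw₀ (hS.resolve_right hpq) hpq
    · simp only [B, if_neg hS, x, Polynomial.coeff_X_pow_self, ne_eq, one_ne_zero,
        not_false_eq_true]
  refine ⟨V, fun v => ?_, fun v hv => ?_, hVdet⟩
  · by_cases hv : v ∈ Z
    · have hle : w v ≤ τ := (hwS v (Or.inr hv)).trans_le (hτ v)
      exact (dvd_iff_dvd_of_dvd_sub ((pow_dvd_pow x hle).trans (hVV₀ v))).2 (hV₀dvd v (Or.inr hv))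
    · exact (dvd_sub_right (hBdvd v)).1 ((pow_dvd_pow x (by have := hN v; omega)).trans (hVB v hv))
  · rw [← coeff_eq_of_X_pow_dvd_sub (hVB v hv) (Nat.lt_succ_of_le (hN v))]
    exact hBcoeff v hv

end RootedForest

end Curve

section Weights

open scoped Polynomial

theorem exists_coeff_eq_zero_of_aeval_eq_zero {σ R : Type*} [CommRing R] [IsDomain R]
    {w : σ → ℕ} {V : σ → R[X]} (hV : ∀ v, Polynomial.X ^ w v ∣ V v) {f : MvPolynomial σ R}
    (hf : aeval V f = 0) {μ : σ →₀ ℕ} (hμ : μ ∈ f.support)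
    (hmin : ∀ ν ∈ f.support, ν ≠ μ → Finsupp.weight w μ < Finsupp.weight w ν) :
    ∃ v ∈ μ.support, (V v).coeff (w v) = 0 := by
  choose y hy using hV
  have hmonomial (ν : σ →₀ ℕ) : ∏ v ∈ ν.support, V v ^ ν v =
      (∏ v ∈ ν.support, y v ^ ν v) * Polynomial.X ^ Finsupp.weight w ν := by
    simp only [hy, mul_pow, Finset.prod_mul_distrib, ← pow_mul, Finset.prod_pow_eq_pow_sum,
      Finsupp.weight_apply, Finsupp.sum, smul_eq_mul, mul_comm]
  have hcoeff : f.coeff μ * (∏ v ∈ μ.support, y v ^ μ v).coeff 0 = 0 := by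
    have h := congrArg (Polynomial.coeff · (Finsupp.weight w μ)) hf
    simp only [aeval_def, eval₂_eq, hmonomial, Polynomial.finsetSum_coeff,
      Polynomial.algebraMap_eq, Polynomial.coeff_C_mul, Polynomial.coeff_zero] at h
    rw [Finset.sum_eq_single_of_mem μ hμ fun ν hν hne => by
      rw [Polynomial.coeff_mul_X_pow', if_neg (hmin ν hν hne).not_ge, mul_zero]] at h
    simpa only [Polynomial.coeff_mul_X_pow', le_refl, if_true, tsub_self] using h
  have hprod := (mul_eq_zero.1 hcoeff).resolve_left (mem_support_iff.1 hμ)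
  rw [← Polynomial.constantCoeff_apply, map_prod, Finset.prod_eq_zero_iff] at hprod
  obtain ⟨v, hv, hv0⟩ := hprod
  refine ⟨v, hv, ?_⟩
  rw [map_pow] at hv0
  rw [hy, Polynomial.coeff_X_pow_mul', if_pos le_rfl, tsub_self]
  exact eq_zero_of_pow_eq_zero hv0

theorem weight_pow_lt_weight_pow {σ : Type*} {rank : σ → ℕ} (hrank : Function.Injective rank)
    {a b : σ →₀ ℕ} {v : σ} (hv : b v < a v) (hab : ∀ u, rank v < rank u → a u = b u) {B : ℕ}
    (hB : b.degree < B) :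
    Finsupp.weight (fun u => B ^ rank u) b < Finsupp.weight (fun u => B ^ rank u) a := by
  classical
  set W : (σ →₀ ℕ) →+ ℕ := Finsupp.weight fun u => B ^ rank u with hW
  let low := b.filter fun u => rank u < rank v
  have hlow : W low < B ^ rank v := by
    have hdegree : low.degree ≤ b.degree :=
      Finsupp.degree_mono fun u => by
        rw [Finsupp.filter_apply]
        split_ifs <;> simp
    refine lt_of_mul_lt_mul_left (a := B) ?_ (Nat.zero_le B)
    calc B * W low ≤ low.degree * B ^ rank v := by
          simp only [hW, Finsupp.weight_apply, Finsupp.degree_apply, Finsupp.sum, smul_eq_mul,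
            Finset.mul_sum, Finset.sum_mul]
          refine Finset.sum_le_sum fun u hu => ?_
          have hu : rank u < rank v := (Finset.mem_filter.1 hu).2
          calc B * (low u * B ^ rank u) = low u * B ^ (rank u + 1) := by ring
            _ ≤ low u * B ^ rank v :=
              Nat.mul_le_mul_left _ (Nat.pow_le_pow_right (by omega) hu)
      _ < B * B ^ rank v := by
          have : 0 < B := by omega
          gcongr
          omega
  have hle : b + Finsupp.single v 1 ≤ a + low := fun u => by
    rcases lt_trichotomy (rank u) (rank v) with hu | hu | hu
    · have : u ≠ v := by rintro rfl; exact hu.false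
      simp [low, hu, this]
    · obtain rfl := hrank hu
      simp [low, Nat.succ_le_iff.2 hv]
    · have : u ≠ v := by rintro rfl; exact hu.false
      simp [low, hab u hu, hu.le, this]
  have hsingle : W (Finsupp.single v 1) = B ^ rank v := by
    rw [hW, Finsupp.weight_single, one_smul]
  obtain ⟨d, hd⟩ := exists_add_of_le hle
  have hW' := congrArg W hd
  rw [map_add, map_add, map_add, hsingle] at hW'
  omega

theorem homogeneousComponent_mem_minorsIdeal {K : Type*} [Field K] {n t : ℕ}
    {f : MvPolynomial (Sym2 (Fin n)) K} (hf : f ∈ minorsIdeal K n t) (d : ℕ) :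
    homogeneousComponent d f ∈ minorsIdeal K n t := by
  let _ : GradedAlgebra (homogeneousSubmodule (Sym2 (Fin n)) K) := MvPolynomial.gradedAlgebra
  have hminor (a b : Fin t → Fin n) : (symMinor K a b).IsHomogeneous t := by
    rw [symMinor, Matrix.det_apply]
    refine IsHomogeneous.sum _ _ _ fun σ _ => ?_
    rw [← mem_homogeneousSubmodule]
    refine Submodule.smul_of_tower_mem _ _ ?_
    simpa using IsHomogeneous.prod Finset.univ
      (fun i => (X s(a (σ i), b i) : MvPolynomial (Sym2 (Fin n)) K)) (fun _ => 1)
      fun i _ => isHomogeneous_X _ _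
  have hideal : (minorsIdeal K n t).IsHomogeneous (homogeneousSubmodule (Sym2 (Fin n)) K) :=
    Ideal.homogeneous_span _ _ fun _ ⟨a, b, _, _, hp⟩ => ⟨t, hp ▸ hminor a b⟩
  rw [← decomposition.decompose'_apply]
  exact hideal d hf

end Weights

namespace IsGoodRank

variable {n : ℕ} {rank : Sym2 (Fin n) → ℕ}

theorem diag_lt (hrank : IsGoodRank n rank) (i : Fin n) : rank s(i, i) < n :=
  (hrank.2.1 i).trans_lt i.2

theorem mem_Ico_of_mem_Uset (hrank : IsGoodRank n rank) {v : Sym2 (Fin n)} (hv : v ∈ Uset n) :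
    rank v ∈ Set.Ico n (2 * n) := by
  obtain ⟨-, -, htwo, hfirst, hlast, -⟩ := hrank
  obtain ⟨i, j, rfl, h | ⟨h, h'⟩ | ⟨h, h'⟩⟩ := hv
  · rw [htwo i j h, Set.mem_Ico]
    omega
  · rw [hfirst i j h h', Set.mem_Ico]
    omega
  · rw [hlast i j h h', Set.mem_Ico]
    omega

theorem lt_two_mul_iff (hrank : IsGoodRank n rank) {v : Sym2 (Fin n)} :
    rank v < 2 * n ↔ v ∈ Dset n ∪ Uset n := by
  refine ⟨fun hv => not_imp_comm.1 (hrank.2.2.2.2.2 v) hv.not_ge, ?_⟩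
  rintro (⟨i, rfl⟩ | hv)
  · have := hrank.diag_lt i
    omega
  · exact (hrank.mem_Ico_of_mem_Uset hv).2

theorem le_of_ne (hrank : IsGoodRank n rank) {i j : Fin n} (hij : i ≠ j) : n ≤ rank s(i, j) := by
  by_cases hv : s(i, j) ∈ Dset n ∪ Uset n
  · refine (hrank.mem_Ico_of_mem_Uset (hv.resolve_left ?_)).1
    rintro ⟨k, hk⟩
    exact hij (Sym2.mk_isDiag_iff.1 (hk ▸ rfl))
  · have := hrank.lt_two_mul_iff.not.2 hv
    omega

theorem isEdgeHeavy {ι κ : Type*} (hrank : IsGoodRank n rank) (F : RootedForest ι κ)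
    (e : ι ≃ Fin n) {B : ℕ} (hB : 1 < B) :
    F.IsEdgeHeavy fun v => B ^ rank (v.map e) := fun p hp => by
  have hedge := hrank.le_of_ne (e.injective.ne (F.parent_ne hp).symm)
  exact ⟨Nat.pow_lt_pow_right hB ((hrank.diag_lt (e p)).trans_le hedge),
    Nat.pow_lt_pow_right hB ((hrank.diag_lt (e (F.parent p))).trans_le hedge)⟩

theorem weight_lt_of_degRevLexLT (hrank : IsGoodRank n rank) {μ ν : Sym2 (Fin n) →₀ ℕ}
    (h : DegRevLexLT rank ν μ) (hdegree : ν.degree = μ.degree) {B : ℕ} (hB : μ.degree < B) (m : ℕ)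
    [DecidablePred (· ∈ Dset n ∪ Uset n)] :
    Finsupp.weight (fun v => B ^ (rank v + if v ∈ Dset n ∪ Uset n then 0 else m)) μ <
      Finsupp.weight (fun v => B ^ (rank v + if v ∈ Dset n ∪ Uset n then 0 else m)) ν := by
  let shifted v := rank v + if v ∈ Dset n ∪ Uset n then 0 else m
  have hshifted {u v} (huv : shifted u ≤ shifted v) : rank u ≤ rank v := by
    have hu := hrank.lt_two_mul_iff (v := u)
    have hv := hrank.lt_two_mul_iff (v := v)
    simp only [shifted] at huv
    split_ifs at huv <;> simp_all <;> omega
  obtain h | ⟨-, v, hv, hagree⟩ := h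
  · exact absurd hdegree h.ne
  · exact weight_pow_lt_weight_pow (rank := shifted)
      (fun u v huv => hrank.1 ((hshifted huv.le).antisymm (hshifted huv.ge))) hv
      (fun u hu => hagree u <| (hshifted hu.le).lt_of_ne
        fun h => hu.ne (congrArg shifted (hrank.1 h))) hB

end IsGoodRank

theorem RootedForest.IsTransversal.exists_mem_support_of_isLeadingMonomial {ι κ K : Type*}
    [Field K] [Fintype κ] {F : RootedForest ι κ} {Z : Set (Sym2 ι)}
    (hZ : F.IsTransversal Z) {n : ℕ} (e : ι ≃ Fin n)
    (hS : ∀ v, v ∈ F.support ∪ Z ↔ v.map e ∈ Dset n ∪ Uset n) {rank : Sym2 (Fin n) → ℕ}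
    (hrank : IsGoodRank n rank) {t : ℕ} (ht : n < t + Fintype.card κ)
    {f : MvPolynomial (Sym2 (Fin n)) K} (hf : f ∈ minorsIdeal K n t) {μ : Sym2 (Fin n) →₀ ℕ}
    (hμ : IsLeadingMonomial rank f μ) : ∃ v ∈ Z, v.map e ∈ μ.support := by
  classical
  have : Fintype ι := Fintype.ofEquiv _ e.symm
  let B := μ.degree + 2
  obtain ⟨m, hm⟩ := hZ.exists_curve (K := K) (hrank.isEdgeHeavy F e (B := B) (by omega))
  let w v := B ^ (rank v + if v ∈ Dset n ∪ Uset n then 0 else m)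
  have hwS : ∀ v ∈ F.support ∪ Z, w (v.map e) = B ^ rank (v.map e) := fun v hv => by
    simp only [w, if_pos ((hS v).1 hv), add_zero]
  have hwm : ∀ v ∉ F.support ∪ Z, m ≤ w (v.map e) := fun v hv => by
    simp only [w, if_neg ((hS v).not.1 hv)]
    exact le_add_self.trans (Nat.lt_pow_self (by omega)).le
  obtain ⟨V, hVdvd, hVcoeff, hVdet⟩ := hm _ hwS hwm
  let V' (v : Sym2 (Fin n)) := V (v.map e.symm)
  have hminors : minorsIdeal K n t ≤ RingHom.ker (aeval (R := K) V') := Ideal.span_le.2 <| by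
    rintro _ ⟨a, b, -, -, rfl⟩
    rw [SetLike.mem_coe, RingHom.mem_ker, symMinor, AlgHom.map_det]
    convert hVdet t (by rwa [Fintype.card_congr e, Fintype.card_fin]) (e.symm ∘ a) (e.symm ∘ b)
    ext
    simp [V']
  have hV'dvd : ∀ v, Polynomial.X ^ w v ∣ V' v := fun v => by
    simpa only [V', Sym2.map_map, Equiv.self_comp_symm, Sym2.map_id', id] using hVdvd (v.map e.symm)
  have hdegree : μ ∈ (homogeneousComponent μ.degree f).support := by
    simp [mem_support_iff.1 hμ.1, coeff_homogeneousComponent]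
  obtain ⟨v, hv, hv0⟩ := exists_coeff_eq_zero_of_aeval_eq_zero hV'dvd
    (hminors (homogeneousComponent_mem_minorsIdeal hf μ.degree)) hdegree fun ν hν hne => by
      rw [mem_support_iff, coeff_homogeneousComponent, ite_ne_right_iff] at hν
      exact hrank.weight_lt_of_degRevLexLT (hμ.2 ν (mem_support_iff.2 hν.2) hne) hν.1
        (by omega) m
  have he : (v.map e.symm).map e = v := by
    rw [Sym2.map_map, Equiv.self_comp_symm, Sym2.map_id, id]
  refine ⟨v.map e.symm, not_not.1 fun hvZ => hVcoeff _ hvZ ?_, he.symm ▸ hv⟩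
  rwa [he]

/-! ### The cycle on `Dset n ∪ Uset n` -/

/-- An enumeration `c 0, c 1, …` with period `n` of the row indices of a symmetric `n × n` matrix,
such that the variables in `Uset n` are those in position `(c p, c (p + 1))`. -/
structure IsCyclicEnumeration (n : ℕ) (c : ℕ → Fin n) : Prop where
  three_le : 3 ≤ n
  eq_iff : ∀ p q, c p = c q ↔ p ≡ q [MOD n]
  mem_Uset_iff : ∀ v, v ∈ Uset n ↔ ∃ p, v = s(c p, c (p + 1))

/-- The list `0, 2, 4, …, 5, 3, 1` of the natural numbers below `n`. -/
def zigzag (n p : ℕ) : ℕ :=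
  if 2 * p < n then 2 * p else 2 * (n - p) - 1

theorem mk_mem_Uset_iff {n : ℕ} {i j : Fin n} : s(i, j) ∈ Uset n ↔
    (j : ℕ) = i + 2 ∨ (i : ℕ) = j + 2 ∨ ((i : ℕ) = 0 ∧ (j : ℕ) = 1) ∨
      ((i : ℕ) = 1 ∧ (j : ℕ) = 0) ∨ ((i : ℕ) = n - 2 ∧ (j : ℕ) = n - 1) ∨
      ((i : ℕ) = n - 1 ∧ (j : ℕ) = n - 2) := by
  refine ⟨fun ⟨k, l, hkl, h⟩ => ?_, fun h => ?_⟩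
  · rcases Sym2.eq_iff.1 hkl with ⟨rfl, rfl⟩ | ⟨rfl, rfl⟩ <;> tauto
  · by_cases hij : (j : ℕ) = i + 2 ∨ ((i : ℕ) = 0 ∧ (j : ℕ) = 1) ∨
      ((i : ℕ) = n - 2 ∧ (j : ℕ) = n - 1)
    · exact ⟨i, j, rfl, hij⟩
    · exact ⟨j, i, Sym2.eq_swap, by tauto⟩

theorem exists_isCyclicEnumeration {n : ℕ} (hn : 3 ≤ n) : ∃ c, IsCyclicEnumeration n c := by
  have hmod (p : ℕ) : p % n < n := Nat.mod_lt p (by omega)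
  have hsucc (p : ℕ) : (p + 1) % n = if p % n + 1 = n then 0 else p % n + 1 := by
    rw [← Nat.mod_add_mod]
    split_ifs with h
    · rw [h, Nat.mod_self]
    · exact Nat.mod_eq_of_lt (by have := hmod p; omega)
  have hlt (p : ℕ) : zigzag n (p % n) < n := by
    have := hmod p
    rw [zigzag]
    split_ifs <;> omega
  refine ⟨fun p => ⟨zigzag n (p % n), hlt p⟩, hn, fun p q => ?_, fun v => ⟨?_, ?_⟩⟩
  · rw [Fin.mk.injEq]
    refine ⟨fun h => ?_, fun h => congrArg (zigzag n) h⟩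
    have hp := hmod p
    have hq := hmod q
    simp only [zigzag] at h
    rw [Nat.ModEq]
    split_ifs at h <;> omega
  · rintro ⟨i, j, rfl, hij⟩
    let p : ℕ := if (j : ℕ) = i + 2 then if (i : ℕ) % 2 = 0 then i / 2 else n - (j + 1) / 2
      else if (i : ℕ) = 0 ∧ (j : ℕ) = 1 then n - 1 else (n - 1) / 2
    have := i.2
    have := j.2
    have hp : p < n := by grind
    refine ⟨p, ?_⟩
    simp only [Sym2.eq_iff, Fin.ext_iff, hsucc, Nat.mod_eq_of_lt hp, zigzag]
    grind
  · rintro ⟨p, rfl⟩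
    have hp := hmod p
    simp only [mk_mem_Uset_iff, hsucc, zigzag]
    grind

namespace IsCyclicEnumeration

variable {n : ℕ} {c : ℕ → Fin n}

theorem bijective (hc : IsCyclicEnumeration n c) : Function.Bijective fun p : Fin n => c p :=
  Finite.injective_iff_bijective.1 fun p q hpq =>
    Fin.ext (((hc.eq_iff p q).1 hpq).eq_of_lt_of_lt p.2 q.2)

theorem surjective (hc : IsCyclicEnumeration n c) : Function.Surjective c :=
  fun i => let ⟨p, hp⟩ := hc.bijective.2 i; ⟨p, hp⟩

theorem rotate (hc : IsCyclicEnumeration n c) (r : ℕ) :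
    IsCyclicEnumeration n fun p => c (p + r) where
  three_le := hc.three_le
  eq_iff p q := (hc.eq_iff _ _).trans (Nat.ModEq.add_iff_right Nat.ModEq.rfl)
  mem_Uset_iff v := by
    refine (hc.mem_Uset_iff v).trans ⟨fun ⟨p, hp⟩ => ?_, fun ⟨p, hp⟩ => ⟨p + r, ?_⟩⟩
    · have hperiod (q : ℕ) : c (q + (n - 1) * r + r) = c q := by
        rw [hc.eq_iff, add_assoc, ← Nat.succ_mul, Nat.succ_eq_add_one,
          Nat.sub_add_cancel (by have := hc.three_le; omega)]
        simp [Nat.ModEq]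
      refine ⟨p + (n - 1) * r, ?_⟩
      rw [hp, hperiod, add_right_comm p, hperiod]
    · rw [hp, add_right_comm]

theorem succ_ne (hc : IsCyclicEnumeration n c) (p : ℕ) : c (p + 1) ≠ c p := fun h => by
  have h1 : 1 ≡ 0 [MOD n] := Nat.ModEq.add_left_cancel' p ((hc.eq_iff _ _).1 h)
  have := h1.eq_of_lt_of_lt (by have := hc.three_le; omega) (by have := hc.three_le; omega)
  omega

end IsCyclicEnumeration

/-- The vertices of the `2n`-cycle on `Dset n ∪ Uset n` in cyclic order: those of even index `2p`
are the diagonal variables in position `(c p, c p)`, those of odd index `2p + 1` are the variables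
of `Uset n` in position `(c p, c (p + 1))`. -/
def vertex {n : ℕ} (c : ℕ → Fin n) (j : ℕ) : Sym2 (Fin n) :=
  s(c (j / 2), c ((j + 1) / 2))

theorem vertex_two_mul {n : ℕ} (c : ℕ → Fin n) (p : ℕ) : vertex c (2 * p) = s(c p, c p) := by
  rw [vertex, Nat.mul_div_cancel_left p two_pos, show (2 * p + 1) / 2 = p by omega]

theorem vertex_two_mul_add_one {n : ℕ} (c : ℕ → Fin n) (p : ℕ) :
    vertex c (2 * p + 1) = s(c p, c (p + 1)) := by
  rw [vertex, show (2 * p + 1) / 2 = p by omega, show (2 * p + 1 + 1) / 2 = p + 1 by omega]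

theorem vertex_rotate {n : ℕ} (c : ℕ → Fin n) (r j : ℕ) :
    vertex (fun p => c (p + r)) j = vertex c (j + 2 * r) := by
  simp only [vertex]
  congr 3 <;> omega

namespace IsCyclicEnumeration

variable {n : ℕ} {c : ℕ → Fin n}

theorem mem_iff_exists_vertex (hc : IsCyclicEnumeration n c) {v : Sym2 (Fin n)} :
    v ∈ Dset n ∪ Uset n ↔ ∃ j, v = vertex c j := by
  refine ⟨?_, fun ⟨j, hj⟩ => ?_⟩
  · rintro (⟨i, rfl⟩ | hv)
    · obtain ⟨p, rfl⟩ := hc.surjective i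
      exact ⟨2 * p, (vertex_two_mul c p).symm⟩
    · obtain ⟨p, rfl⟩ := (hc.mem_Uset_iff v).1 hv
      exact ⟨2 * p + 1, (vertex_two_mul_add_one c p).symm⟩
  · obtain ⟨p, rfl | rfl⟩ := Nat.even_or_odd' j
    · exact Or.inl ⟨c p, hj.trans (vertex_two_mul c p)⟩
    · exact Or.inr ((hc.mem_Uset_iff v).2 ⟨p, hj.trans (vertex_two_mul_add_one c p)⟩)

theorem vertex_eq_iff (hc : IsCyclicEnumeration n c) {i j : ℕ} :
    vertex c i = vertex c j ↔ i ≡ j [MOD 2 * n] := by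
  have hdouble {p q : ℕ} : 2 * p ≡ 2 * q [MOD 2 * n] ↔ p ≡ q [MOD n] :=
    Nat.ModEq.mul_left_cancel_iff' two_ne_zero
  have hparity {p q : ℕ} : ¬ 2 * p ≡ 2 * q + 1 [MOD 2 * n] := fun h => by
    have h2 : 2 * p ≡ 2 * q + 1 [MOD 2] := h.of_mul_right n
    rw [Nat.ModEq] at h2
    omega
  obtain ⟨p, rfl | rfl⟩ := Nat.even_or_odd' i <;> obtain ⟨q, rfl | rfl⟩ := Nat.even_or_odd' j
  · simp only [vertex_two_mul, hdouble, Sym2.eq_iff, hc.eq_iff, and_self, or_self]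
  · refine iff_of_false (fun h => ?_) hparity
    rw [vertex_two_mul, vertex_two_mul_add_one, Sym2.eq_iff] at h
    exact hc.succ_ne q (by grind)
  · refine iff_of_false (fun h => ?_) fun h => hparity h.symm
    rw [vertex_two_mul, vertex_two_mul_add_one, Sym2.eq_iff] at h
    exact hc.succ_ne p (by grind)
  · rw [Nat.ModEq.add_iff_right Nat.ModEq.rfl, hdouble, vertex_two_mul_add_one,
      vertex_two_mul_add_one, Sym2.eq_iff]
    simp only [hc.eq_iff]
    refine ⟨?_, fun h => Or.inl ⟨h, h.add_right 1⟩⟩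
    rintro (⟨h, -⟩ | ⟨h₁, h₂⟩)
    · exact h
    · have h : 2 ≡ 0 [MOD n] := Nat.ModEq.add_left_cancel' q ((h₁.add_right 1).symm.trans h₂)
      have := h.eq_of_lt_of_lt (by have := hc.three_le; omega) (by have := hc.three_le; omega)
      omega

theorem gAdj_vertex_succ (hc : IsCyclicEnumeration n c) (j : ℕ) :
    GAdj n (vertex c j) (vertex c (j + 1)) := by
  obtain ⟨p, rfl | rfl⟩ := Nat.even_or_odd' j
  · rw [vertex_two_mul, vertex_two_mul_add_one]
    exact Or.inl ⟨c p, rfl, (hc.mem_Uset_iff _).2 ⟨p, rfl⟩, _, _, rfl, Or.inl rfl⟩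
  · rw [vertex_two_mul_add_one, add_assoc, ← Nat.mul_succ, vertex_two_mul]
    exact Or.inr ⟨c (p + 1), rfl, (hc.mem_Uset_iff _).2 ⟨p, rfl⟩, _, _, rfl, Or.inr rfl⟩

theorem gAdj_vertex_iff (hc : IsCyclicEnumeration n c) {i j : ℕ} :
    GAdj n (vertex c i) (vertex c j) ↔ i + 1 ≡ j [MOD 2 * n] ∨ j + 1 ≡ i [MOD 2 * n] := by
  have hdiag {i j : ℕ} (h : ∃ x : Fin n, vertex c i = s(x, x) ∧ vertex c j ∈ Uset n ∧
      ∃ y z : Fin n, vertex c j = s(y, z) ∧ (x = y ∨ x = z)) :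
      i + 1 ≡ j [MOD 2 * n] ∨ j + 1 ≡ i [MOD 2 * n] := by
    obtain ⟨x, hi, hj, y, z, hyz, hx⟩ := h
    obtain ⟨p, rfl⟩ := hc.surjective x
    obtain ⟨q, hq⟩ := (hc.mem_Uset_iff _).1 hj
    rw [← vertex_two_mul, hc.vertex_eq_iff] at hi
    have hpq : c p = c q ∨ c p = c (q + 1) := by
      rw [hyz, Sym2.eq_iff] at hq
      grind
    rw [← vertex_two_mul_add_one, hc.vertex_eq_iff] at hq
    refine hpq.imp (fun h => ?_) fun h => ?_ <;>
      have h := Nat.ModEq.mul_left' 2 ((hc.eq_iff _ _).1 h)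
    · exact (hi.trans h).add_right 1 |>.trans hq.symm
    · exact (hq.add_right 1).trans (hi.trans h).symm
  refine ⟨fun h => h.elim hdiag fun h => (hdiag h).symm, ?_⟩
  rintro (h | h)
  · exact hc.vertex_eq_iff.2 h ▸ hc.gAdj_vertex_succ i
  · exact hc.vertex_eq_iff.2 h ▸ (hc.gAdj_vertex_succ j).symm

end IsCyclicEnumeration

/-! ### Leading monomials of minors -/

theorem symMinor_mem_minorsIdeal (K : Type*) [Field K] {n t : ℕ} {a b : Fin t → Fin n}
    (ha : Function.Injective a) (hb : Function.Injective b) :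
    symMinor K a b ∈ minorsIdeal K n t := by
  have hsort {g : Fin t → Fin n} (hg : Function.Injective g) : StrictMono (g ∘ Tuple.sort g) :=
    (Tuple.monotone_sort g).strictMono_of_injective (hg.comp (Tuple.sort g).injective)
  let M := Matrix.of fun k l => (X s(a k, b l) : MvPolynomial (Sym2 (Fin n)) K)
  have hM : M = ((M.submatrix (Tuple.sort a) (Tuple.sort b)).submatrix id
      ⇑(Tuple.sort b).symm).submatrix ⇑(Tuple.sort a).symm id := by
    ext1 k l
    simp only [Matrix.submatrix_apply, id, Equiv.apply_symm_apply]
  rw [symMinor, show Matrix.of _ = M from rfl, hM, Matrix.det_permute, Matrix.det_permute']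
  exact Ideal.mul_mem_left _ _ (Ideal.mul_mem_left _ _
    (Ideal.subset_span ⟨_, _, hsort ha, hsort hb, rfl⟩))

theorem not_degRevLexLT_self {n : ℕ} {rank : Sym2 (Fin n) → ℕ} (μ : Sym2 (Fin n) →₀ ℕ) :
    ¬ DegRevLexLT rank μ μ := by
  rintro (h | ⟨-, v, hv, -⟩)
  · exact h.false
  · exact hv.false

theorem degRevLexLT_sum_single {ι : Type*} [Fintype ι] {n : ℕ} {rank : Sym2 (Fin n) → ℕ}
    {g h : ι → Sym2 (Fin n)} {k : ι} (hk : rank (g k) < rank (h k))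
    (hgh : ∀ j, h j = g j ∨ rank (g j) < rank (h k)) :
    DegRevLexLT rank (∑ j, Finsupp.single (h j) 1) (∑ j, Finsupp.single (g j) 1) := by
  classical
  have hdeg (f : ι → Sym2 (Fin n)) :
      ((∑ j, Finsupp.single (f j) 1 : Sym2 (Fin n) →₀ ℕ).sum fun _ e => e) = Fintype.card ι := by
    rw [← Finsupp.sum_finsetSum_index (fun _ => rfl) fun _ _ _ => rfl]
    simp
  obtain ⟨l, hl, hmax⟩ := Finset.exists_max_image ({j | h j ≠ g j} : Finset ι)
    (fun j => rank (h j)) ⟨k, by simpa using fun hkk => hk.ne' (congrArg rank hkk)⟩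
  simp only [Finset.mem_filter_univ] at hl hmax
  have hkl : rank (h k) ≤ rank (h l) := hmax k fun hkk => hk.ne' (congrArg rank hkk)
  have hne {j : ι} (hj : h j ≠ g j) {w : Sym2 (Fin n)} (hw : rank (h l) ≤ rank w) : g j ≠ w := by
    rintro rfl
    exact ((hgh j).resolve_left hj |>.trans_le (hkl.trans hw)).false
  refine Or.inr ⟨by rw [hdeg, hdeg], h l, ?_, fun w hw => ?_⟩
  · rw [Finsupp.finsetSum_apply, Finsupp.finsetSum_apply]
    refine Finset.sum_lt_sum (fun j _ => ?_) ⟨l, Finset.mem_univ l, ?_⟩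
    · by_cases hj : h j = g j
      · rw [hj]
      · rw [Finsupp.single_eq_of_ne' (hne hj le_rfl)]
        exact zero_le
    · rw [Finsupp.single_eq_of_ne' (hne hl le_rfl), Finsupp.single_eq_same]
      exact one_pos
  · rw [Finsupp.finsetSum_apply, Finsupp.finsetSum_apply]
    refine Finset.sum_congr rfl fun j _ => ?_
    by_cases hj : h j = g j
    · rw [hj]
    · have hjw : h j ≠ w := by
        rintro rfl
        exact (hw.trans_le (hmax j hj)).false
      rw [Finsupp.single_eq_of_ne' (hne hj hw.le), Finsupp.single_eq_of_ne' hjw]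

theorem isLeadingMonomial_symMinor {K : Type*} [Field K] {n t : ℕ} {rank : Sym2 (Fin n) → ℕ}
    {a b : Fin t → Fin n} (h : ∀ σ : Equiv.Perm (Fin t), σ ≠ 1 → DegRevLexLT rank
      (∑ k, Finsupp.single s(a k, b (σ k)) 1) (∑ k, Finsupp.single s(a k, b k) 1)) :
    IsLeadingMonomial rank (symMinor K a b) (∑ k, Finsupp.single s(a k, b k) 1) := by
  classical
  let ν (σ : Equiv.Perm (Fin t)) : Sym2 (Fin n) →₀ ℕ := ∑ k, Finsupp.single s(a k, b (σ k)) 1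
  have hcoeff (μ : Sym2 (Fin n) →₀ ℕ) : coeff μ (symMinor K a b) =
      ∑ σ : Equiv.Perm (Fin t), if ν σ = μ then ((Equiv.Perm.sign σ : ℤ) : K) else 0 := by
    rw [symMinor, ← Matrix.det_transpose, Matrix.det_apply', coeff_sum]
    refine Finset.sum_congr rfl fun σ _ => ?_
    have hprod : ∏ k, (X s(a k, b (σ k)) : MvPolynomial (Sym2 (Fin n)) K) = monomial (ν σ) 1 :=
      (monomial_sum_one _ _).symm
    simp only [Matrix.transpose_apply, Matrix.of_apply, hprod]
    rw [← map_intCast (C : K →+* MvPolynomial (Sym2 (Fin n)) K), coeff_C_mul, coeff_monomial,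
      mul_ite, mul_one, mul_zero]
  have hlt {σ : Equiv.Perm (Fin t)} (hσ : σ ≠ 1) : DegRevLexLT rank (ν σ) (ν 1) := h σ hσ
  change IsLeadingMonomial rank _ (ν 1)
  refine ⟨?_, fun μ hμ hne => ?_⟩
  · rw [mem_support_iff, hcoeff, Finset.sum_eq_single_of_mem 1 (Finset.mem_univ 1)]
    · simp
    · exact fun σ _ hσ => if_neg fun hν => not_degRevLexLT_self (ν 1) (hν ▸ hlt hσ)
  · rw [mem_support_iff, hcoeff] at hμ
    obtain ⟨σ, -, hσ⟩ := Finset.exists_ne_zero_of_sum_ne_zero hμ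
    obtain rfl : ν σ = μ := of_not_not fun hν => hσ (if_neg hν)
    exact hlt fun h1 => hne (h1 ▸ rfl)

section SkewDiagonal

variable {m : ℕ} {δ : Fin m → ℕ}

theorem exists_eq_two_mul_add {x : Fin m → ℕ} (hx : ∀ i j, i < j → x i + 2 ≤ x j)
    (hm : ∀ i, x i < 2 * m + 2) :
    ∃ δ : Fin m → ℕ, Monotone δ ∧ (∀ i, δ i ≤ 3) ∧ ∀ i, x i = 2 * i + δ i := by
  obtain _ | m := m
  · exact ⟨0, monotone_const, fun i => i.elim0, fun i => i.elim0⟩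
  have hmono : Monotone fun i : Fin (m + 1) => (x i : ℤ) - 2 * i := by
    refine Fin.monotone_iff_le_succ.2 fun i => ?_
    have := hx i.castSucc i.succ Fin.castSucc_lt_succ
    simp only [Fin.val_castSucc, Fin.val_succ]
    omega
  have hzero (i : Fin (m + 1)) := hmono (Fin.zero_le i)
  have hlast (i : Fin (m + 1)) := hmono (Fin.le_last i)
  simp only [Fin.val_zero, Fin.val_last] at hzero hlast
  have hm := hm (Fin.last m)
  refine ⟨fun i => x i - 2 * i, fun i j hij => ?_, fun i => ?_, fun i => ?_⟩
  · have := hmono hij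
    dsimp only at this ⊢
    omega
  · have := hlast i
    dsimp only
    omega
  · have := hzero i
    dsimp only
    omega

/-- The rows `k + (δ k - 1)` of the diagonal entries of the minor whose leading monomial is
`∏ k, vertex c (2 * k + δ k)`, where the truncated subtraction gives `k` if `δ k = 0`. -/
def skewRow (δ : Fin m → ℕ) (k : Fin m) : ℕ := k + (δ k - 1)

/-- The columns `k + min (δ k) 1` of the diagonal entries of the minor whose leading monomial is
`∏ k, vertex c (2 * k + δ k)`. -/
def skewCol (δ : Fin m → ℕ) (k : Fin m) : ℕ := k + min (δ k) 1

theorem strictMono_skewRow (hδ : Monotone δ) : StrictMono (skewRow δ) := fun i j hij => by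
  have := hδ hij.le
  simp only [skewRow]
  omega

theorem strictMono_skewCol (hδ : Monotone δ) : StrictMono (skewCol δ) := fun i j hij => by
  have := hδ hij.le
  simp only [skewCol]
  omega

theorem mk_skewRow_skewCol {n : ℕ} (c : ℕ → Fin n) {k : Fin m} (hk : δ k ≤ 3) :
    s(c (skewRow δ k), c (skewCol δ k)) = vertex c (2 * k + δ k) := by
  simp only [vertex, skewRow, skewCol]
  obtain h | h | h | h : δ k = 0 ∨ δ k = 1 ∨ δ k = 2 ∨ δ k = 3 := by omega
  · rw [h]; congr 3 <;> omega
  · rw [h]; congr 3 <;> omega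
  · rw [h]; congr 3 <;> omega
  · rw [h, Sym2.eq_swap]; congr 3 <;> omega

theorem perm_apply_eq_self (hδ : Monotone δ) {σ : Equiv.Perm (Fin m)}
    (hσ : ∀ k, (skewRow δ k ≤ skewCol δ (σ k) + 1 ∧ skewCol δ (σ k) ≤ skewRow δ k + 1) ∨
      (skewRow δ k = m + 1 ∧ skewCol δ (σ k) = 0)) {k : Fin m} (hk : δ k = 1 ∨ δ k = 3) :
    σ k = k := by
  have hstable {p : Fin m → Prop} (h : ∀ i, p i → p (σ i)) {i : Fin m} (hi : p (σ i)) : p i := by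
    simpa using Equiv.Perm.perm_symm_on_of_perm_on_finite h hi
  have hlt {i j : Fin m} (hij : δ i < δ j) : i < j := lt_of_not_ge fun h => (hδ h).not_gt hij
  simp only [skewRow, skewCol] at hσ
  obtain hk | hk := hk
  · have hle {i : Fin m} (hi : i ≤ k) : σ i ≤ i ∨ σ i < k := by
      have := hδ hi
      have := hσ i
      have : δ (σ i) < δ k → σ i < k := hlt
      omega
    have h₁ : σ k ≤ k := by
      have := hle le_rfl
      omega
    have h₂ : ¬ σ k < k := fun h => lt_irrefl k (hstable (p := (· < k)) (fun i hi => by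
      have := hle hi.le
      omega) h)
    omega
  · have hzero {i : Fin m} (h : δ (σ i) = 0) : δ i = 0 := hstable (p := (δ · = 0)) (fun i hi => by
      have := hσ i
      have : σ i ≤ i → δ (σ i) ≤ δ i := fun h => hδ h
      omega) h
    have hge {i : Fin m} (hi : k ≤ i) : i ≤ σ i := by
      have := hδ hi
      have := hσ i
      have : δ (σ i) = 0 → δ i = 0 := hzero
      omega
    have h₂ : ¬ k < σ k := fun h => lt_irrefl k (hstable (p := (k < ·)) (fun i hi => by
      have := hge hi.le
      omega) h)
    have := hge le_rfl
    omega

end SkewDiagonal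

namespace IsCyclicEnumeration

theorem exists_eq_image_vertex {n : ℕ} {c : ℕ → Fin n} (hc : IsCyclicEnumeration n c)
    {N : Finset (Sym2 (Fin n))} (hN : ↑N ⊆ Dset n ∪ Uset n) :
    ∃ P ⊆ Finset.range (2 * n), P.card = N.card ∧ N = P.image (vertex c) := by
  have hlt (j : ℕ) : j % (2 * n) < 2 * n := Nat.mod_lt j (by have := hc.three_le; omega)
  refine ⟨{j ∈ Finset.range (2 * n) | vertex c j ∈ N}, Finset.filter_subset _ _, ?_⟩
  have himage : N = Finset.image (vertex c) {j ∈ Finset.range (2 * n) | vertex c j ∈ N} := by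
    refine Finset.ext fun v => ⟨fun hv => ?_, fun hv => ?_⟩
    · obtain ⟨j, rfl⟩ := hc.mem_iff_exists_vertex.1 (hN hv)
      have hj : vertex c (j % (2 * n)) = vertex c j := hc.vertex_eq_iff.2 (Nat.mod_modEq j _)
      exact Finset.mem_image.2 ⟨_, Finset.mem_filter.2
        ⟨Finset.mem_range.2 (hlt j), hj.symm ▸ hv⟩, hj⟩
    · obtain ⟨j, hj, rfl⟩ := Finset.mem_image.1 hv
      exact (Finset.mem_filter.1 hj).2
  refine ⟨?_, himage⟩
  conv_rhs => rw [himage]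
  refine (Finset.card_image_of_injOn fun i hi j hj hij => ?_).symm
  simp only [Finset.coe_filter, Finset.mem_range, Set.mem_ofPred_eq] at hi hj
  exact (hc.vertex_eq_iff.1 hij).eq_of_lt_of_lt hi.1 hj.1

end IsCyclicEnumeration

-- Fewer than `n` vertices miss one of the `n` pairs `{2 * p, 2 * p + 1}`; rotate it to the end.
theorem exists_isCyclicEnumeration_image_vertex {n : ℕ} (hn : 3 ≤ n) {N : Finset (Sym2 (Fin n))}
    (hN : ↑N ⊆ Dset n ∪ Uset n) (hcard : N.card < n) : ∃ c, IsCyclicEnumeration n c ∧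
      ∃ P ⊆ Finset.range (2 * n - 2), P.card = N.card ∧ N = P.image (vertex c) := by
  obtain ⟨c, hc⟩ := exists_isCyclicEnumeration hn
  obtain ⟨P, hPn, hPcard, hP⟩ := hc.exists_eq_image_vertex hN
  obtain ⟨p, hpn, hp⟩ : ∃ p ∈ Finset.range n, p ∉ P.image (· / 2) :=
    Finset.exists_mem_notMem_of_card_lt_card
      (by rw [Finset.card_range]; exact Finset.card_image_le.trans_lt (hPcard ▸ hcard))
  obtain ⟨P', hP'n, hP'card, hP'⟩ := (hc.rotate (p + 1)).exists_eq_image_vertex hN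
  refine ⟨_, hc.rotate (p + 1), P', fun j hj => ?_, hP'card, hP'⟩
  have hmem : vertex c (j + 2 * (p + 1)) ∈ N := by
    rw [← vertex_rotate, hP']
    exact Finset.mem_image_of_mem _ hj
  rw [hP] at hmem
  obtain ⟨i, hi, hij⟩ := Finset.mem_image.1 hmem
  rw [hc.vertex_eq_iff] at hij
  have hin := Finset.mem_range.1 (hPn hi)
  have hjn := Finset.mem_range.1 (hP'n hj)
  rw [Finset.mem_range] at hpn ⊢
  by_contra hlast
  have hmod : j + 2 * (p + 1) ≡ 2 * p + (j - (2 * n - 2)) [MOD 2 * n] := by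
    rw [show j + 2 * (p + 1) = 2 * p + (j - (2 * n - 2)) + 2 * n by omega]
    exact Nat.add_modEq_right
  have := (hij.trans hmod).eq_of_lt_of_lt hin (by omega)
  exact hp (Finset.mem_image.2 ⟨i, hi, by omega⟩)

theorem exists_eq_image_vertex_two_mul_add {m : ℕ} (hm : 1 ≤ m)
    {N : Finset (Sym2 (Fin (m + 2)))} (hN : ↑N ⊆ Dset (m + 2) ∪ Uset (m + 2)) (hcard : N.card = m)
    (hindep : ∀ v ∈ N, ∀ w ∈ N, ¬ GAdj (m + 2) v w) :
    ∃ c, IsCyclicEnumeration (m + 2) c ∧ ∃ δ : Fin m → ℕ, Monotone δ ∧ (∀ k, δ k ≤ 3) ∧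
      N = Finset.univ.image fun k : Fin m => vertex c (2 * k + δ k) := by
  obtain ⟨c, hc, P, hPm, hPcard, hP⟩ :=
    exists_isCyclicEnumeration_image_vertex (by omega) hN (by omega)
  let x := P.orderEmbOfFin (hPcard.trans hcard)
  have hx (k : Fin m) : x k ∈ P := Finset.orderEmbOfFin_mem P _ k
  have hgap (i j : Fin m) (hij : i < j) : x i + 2 ≤ x j := by
    have hlt : x i < x j := x.strictMono hij
    have hne : x i + 1 ≠ x j := fun h => by
      refine hindep (vertex c (x i)) ?_ (vertex c (x i + 1)) ?_ (hc.gAdj_vertex_succ (x i)) <;>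
        rw [hP]
      · exact Finset.mem_image_of_mem _ (hx i)
      · exact Finset.mem_image_of_mem _ (h ▸ hx j)
    omega
  obtain ⟨δ, hδ, hδ3, hxδ⟩ := exists_eq_two_mul_add hgap
    fun k => (Finset.mem_range.1 (hPm (hx k))).trans_eq (by omega)
  refine ⟨c, hc, δ, hδ, hδ3, ?_⟩
  rw [hP, ← Finset.image_orderEmbOfFin_univ P (hPcard.trans hcard), Finset.image_image]
  exact Finset.image_congr fun k _ => congrArg (vertex c) (hxδ k)

theorem IsCyclicEnumeration.modEq_of_mk_mem {n : ℕ} {c : ℕ → Fin n}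
    (hc : IsCyclicEnumeration n c) {a b : ℕ} (h : s(c a, c b) ∈ Dset n ∪ Uset n) :
    a ≡ b [MOD n] ∨ a + 1 ≡ b [MOD n] ∨ b + 1 ≡ a [MOD n] := by
  obtain ⟨x, hx⟩ | hU := h
  · rw [Sym2.eq_iff] at hx
    exact Or.inl ((hc.eq_iff a b).1 (by grind))
  · obtain ⟨p, hp⟩ := (hc.mem_Uset_iff _).1 hU
    rw [Sym2.eq_iff] at hp
    simp only [hc.eq_iff] at hp
    obtain ⟨ha, hb⟩ | ⟨ha, hb⟩ := hp
    · exact Or.inr (Or.inl ((ha.add_right 1).trans hb.symm))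
    · exact Or.inr (Or.inr ((hb.add_right 1).trans ha.symm))

section SkewMinor

variable {m : ℕ} {c : ℕ → Fin (m + 2)} {δ : Fin m → ℕ}

theorem skewRow_lt (hδ : ∀ k, δ k ≤ 3) (k : Fin m) : skewRow δ k < m + 2 := by
  have := hδ k
  simp only [skewRow]
  omega

theorem skewCol_lt (k : Fin m) : skewCol δ k < m + 1 := by
  simp only [skewCol]
  omega

theorem injective_skewRow (hc : IsCyclicEnumeration (m + 2) c) (hδ : Monotone δ)
    (hδ3 : ∀ k, δ k ≤ 3) : Function.Injective fun k => c (skewRow δ k) := fun k l hkl =>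
  (strictMono_skewRow hδ).injective
    (((hc.eq_iff _ _).1 hkl).eq_of_lt_of_lt (skewRow_lt hδ3 k) (skewRow_lt hδ3 l))

theorem injective_skewCol (hc : IsCyclicEnumeration (m + 2) c) (hδ : Monotone δ) :
    Function.Injective fun k => c (skewCol δ k) := fun k l hkl =>
  (strictMono_skewCol hδ).injective
    (((hc.eq_iff _ _).1 hkl).eq_of_lt_of_lt (Nat.lt_succ_of_lt (skewCol_lt k))
      (Nat.lt_succ_of_lt (skewCol_lt l)))

theorem perm_apply_eq_self_of_mk_mem (hc : IsCyclicEnumeration (m + 2) c) (hδ : Monotone δ)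
    (hδ3 : ∀ k, δ k ≤ 3) {σ : Equiv.Perm (Fin m)}
    (hσ : ∀ k, s(c (skewRow δ k), c (skewCol δ (σ k))) ∈ Dset (m + 2) ∪ Uset (m + 2)) {k : Fin m}
    (hk : δ k = 1 ∨ δ k = 3) : σ k = k := by
  refine perm_apply_eq_self hδ (fun k => ?_) hk
  have hr := skewRow_lt hδ3 k
  have hq := skewCol_lt (δ := δ) (σ k)
  obtain h | h | h := hc.modEq_of_mk_mem (hσ k)
  · have := h.eq_of_lt_of_lt hr (by omega)
    omega
  · obtain hlast | hlast := Nat.lt_succ_iff_lt_or_eq.1 hr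
    · have := h.eq_of_lt_of_lt (by omega) (by omega)
      omega
    · rw [hlast] at h
      have h0 : 0 ≡ skewCol δ (σ k) [MOD m + 2] := (by simp [Nat.ModEq] : 0 ≡ m + 2 [MOD _]).trans h
      have := h0.eq_of_lt_of_lt (by omega) (by omega)
      omega
  · have := h.eq_of_lt_of_lt (by omega) hr
    omega

-- If all entries chosen by `σ` lie in `Dset ∪ Uset`, then `σ` only moves diagonal variables, and
-- some of them to off-diagonal ones.
theorem degRevLexLT_skew (hc : IsCyclicEnumeration (m + 2) c) (hδ : Monotone δ)
    (hδ3 : ∀ k, δ k ≤ 3) {rank : Sym2 (Fin (m + 2)) → ℕ} (hrank : IsGoodRank (m + 2) rank)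
    {σ : Equiv.Perm (Fin m)} (hσ : σ ≠ 1) : DegRevLexLT rank
      (∑ k, Finsupp.single s(c (skewRow δ k), c (skewCol δ (σ k))) 1)
      (∑ k, Finsupp.single s(c (skewRow δ k), c (skewCol δ k)) 1) := by
  by_cases hmem : ∀ k, s(c (skewRow δ k), c (skewCol δ (σ k))) ∈ Dset (m + 2) ∪ Uset (m + 2)
  · have hfix {k : Fin m} (hk : δ k = 1 ∨ δ k = 3) : σ k = k :=
      perm_apply_eq_self_of_mk_mem hc hδ hδ3 hmem hk
    have hdiag {k : Fin m} (hk : ¬ (δ k = 1 ∨ δ k = 3)) : skewRow δ k = skewCol δ k := by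
      have := hδ3 k
      simp only [skewRow, skewCol]
      omega
    obtain ⟨k, hk⟩ : ∃ k, σ k ≠ k := by
      by_contra! h
      exact hσ (Equiv.ext h)
    have hlt {l : Fin m} (hl : σ l ≠ l) : rank s(c (skewRow δ l), c (skewCol δ l)) < m + 2 := by
      rw [hdiag fun h => hl (hfix h)]
      exact hrank.diag_lt _
    have hle : m + 2 ≤ rank s(c (skewRow δ k), c (skewCol δ (σ k))) := hrank.le_of_ne fun h => by
      rw [hdiag fun h => hk (hfix h)] at h
      exact hk (injective_skewCol hc hδ h).symm
    refine degRevLexLT_sum_single (k := k) ((hlt hk).trans_le hle) fun l => ?_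
    by_cases hl : σ l = l
    · exact Or.inl (by rw [hl])
    · exact Or.inr ((hlt hl).trans_le hle)
  · obtain ⟨k, hk⟩ := not_forall.1 hmem
    have hlt (l : Fin m) : rank s(c (skewRow δ l), c (skewCol δ l)) < 2 * (m + 2) := by
      rw [hrank.lt_two_mul_iff, mk_skewRow_skewCol c (hδ3 l)]
      exact hc.mem_iff_exists_vertex.2 ⟨_, rfl⟩
    have hle := not_lt.1 fun h => hk (hrank.lt_two_mul_iff.1 h)
    exact degRevLexLT_sum_single ((hlt k).trans_le hle) fun l => Or.inr ((hlt l).trans_le hle)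

end SkewMinor

theorem prod_X_mem_initialIdeal {K : Type*} [Field K] {m : ℕ} (hm : 1 ≤ m)
    {rank : Sym2 (Fin (m + 2)) → ℕ} (hrank : IsGoodRank (m + 2) rank)
    {N : Finset (Sym2 (Fin (m + 2)))} (hN : ↑N ⊆ Dset (m + 2) ∪ Uset (m + 2)) (hcard : N.card = m)
    (hindep : ∀ v ∈ N, ∀ w ∈ N, ¬ GAdj (m + 2) v w) :
    ∏ v ∈ N, X v ∈ initialIdeal rank (minorsIdeal K (m + 2) m) := by
  obtain ⟨c, hc, δ, hδ, hδ3, hNδ⟩ := exists_eq_image_vertex_two_mul_add hm hN hcard hindep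
  have hinj : Set.InjOn (fun k : Fin m => vertex c (2 * k + δ k)) ↑(Finset.univ : Finset (Fin m)) :=
    Finset.card_image_iff.1 (by rw [← hNδ, hcard, Finset.card_univ, Fintype.card_fin])
  let f : MvPolynomial (Sym2 (Fin (m + 2))) K :=
    symMinor K (fun k : Fin m => c (skewRow δ k)) fun k => c (skewCol δ k)
  have hf : f ∈ minorsIdeal K (m + 2) m :=
    symMinor_mem_minorsIdeal K (injective_skewRow hc hδ hδ3) (injective_skewCol hc hδ)
  have hlead : IsLeadingMonomial rank f
      (∑ k, Finsupp.single s(c (skewRow δ k), c (skewCol δ k)) 1) :=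
    isLeadingMonomial_symMinor fun σ hσ => degRevLexLT_skew hc hδ hδ3 hrank hσ
  have hprod : ∏ v ∈ N, (X v : MvPolynomial (Sym2 (Fin (m + 2))) K) =
      monomial (∑ k, Finsupp.single s(c (skewRow δ k), c (skewCol δ k)) 1) 1 := by
    rw [hNδ, Finset.prod_image hinj, monomial_sum_one]
    exact Finset.prod_congr rfl fun k _ => by rw [mk_skewRow_skewCol c (hδ3 k), X]
  exact Ideal.subset_span ⟨f, hf, support_nonempty.1 ⟨_, hlead.1⟩, _, hlead, hprod⟩

/-! ### Leading monomials of determinantal ideals -/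

theorem RootedForest.isTransversal_range_union_range {ι : Type*} (F : RootedForest ι (Fin 3))
    {a b : Fin 3 → ι} (ha : ∀ k, F.tree (a k) = k) (hb : ∀ k, F.tree (b k) = k + 1) :
    F.IsTransversal (Set.range (fun k => s(F.root k, F.root k)) ∪ Set.range fun k => s(a k, b k))
    where
  root_mem k := Or.inl ⟨k, rfl⟩
  existsUnique k l := by
    have hmem {p q : ι} (h : s(p, q) ∈ Set.range (fun k => s(F.root k, F.root k)) ∪
        Set.range fun k => s(a k, b k)) : (∃ j, p = F.root j ∧ q = F.root j) ∨
          (∃ j, p = a j ∧ q = b j) ∨ ∃ j, p = b j ∧ q = a j := by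
      simp only [Set.mem_union, Set.mem_range, Sym2.eq_iff] at h
      grind
    have : ∀ j : Fin 3, j ≠ j + 1 ∧ j ≠ j + 1 + 1 := by decide
    obtain rfl | rfl | rfl : k = l ∨ l = k + 1 ∨ k = l + 1 := by decide +revert
    · refine ⟨(F.root k, F.root k), ⟨F.tree_root k, F.tree_root k, Or.inl ⟨k, rfl⟩⟩, ?_⟩
      rintro ⟨p, q⟩ ⟨hp, hq, h⟩
      have := F.tree_root
      grind
    · refine ⟨(a k, b k), ⟨ha k, hb k, Or.inr ⟨k, rfl⟩⟩, ?_⟩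
      rintro ⟨p, q⟩ ⟨hp, hq, h⟩
      have := F.tree_root
      grind
    · refine ⟨(b l, a l), ⟨hb l, ha l, Or.inr ⟨l, Sym2.eq_swap⟩⟩, ?_⟩
      rintro ⟨p, q⟩ ⟨hp, hq, h⟩
      have := F.tree_root
      grind

section PathForest

variable {n : ℕ} {κ : Type*} [PartialOrder κ] {tree : Fin n → κ} {root : κ → Fin n}

theorem tree_eq_of_between (hmono : Monotone tree) (hroot : ∀ k, tree (root k) = k) {p q : Fin n}
    (h : p ≤ q ∧ q ≤ root (tree p) ∨ root (tree p) ≤ q ∧ q ≤ p) : tree q = tree p := by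
  obtain ⟨h₁, h₂⟩ | ⟨h₁, h₂⟩ := h
  · exact ((hmono h₂).trans_eq (hroot _)).antisymm (hmono h₁)
  · exact (hmono h₂).antisymm ((hroot _).symm.trans_le (hmono h₁))

/-- The forest of paths obtained by cutting the path `0, 1, …, n - 1` into the fibres of a monotone
function `tree`, where every edge points towards the chosen root of its fibre. -/
def pathForest (hmono : Monotone tree) (hroot : ∀ k, tree (root k) = k) :
    RootedForest (Fin n) κ where
  parent p := if h : p < root (tree p) then ⟨p + 1, by omega⟩ else ⟨p - 1, by omega⟩
  depth p := (p - root (tree p)) + (root (tree p) - p : ℕ)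
  tree := tree
  root := root
  depth_parent p hp := by
    have hparent : tree (if h : p < root (tree p) then ⟨p + 1, by omega⟩ else ⟨p - 1, by omega⟩) =
        tree p := tree_eq_of_between hmono hroot (by
      simp only [Fin.le_def, Fin.lt_def]
      split_ifs <;> dsimp only <;> omega)
    rw [hparent]
    split_ifs with h <;> simp only [Fin.lt_def] at h ⊢ <;> omega
  tree_parent p hp := tree_eq_of_between hmono hroot (by
    simp only [Fin.le_def, Fin.lt_def]
    split_ifs <;> dsimp only <;> omega)
  depth_root k := by simp only [hroot]; omega
  tree_root := hroot
  eq_root p hp := Fin.ext (by omega)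

theorem mk_mem_support_pathForest (hmono : Monotone tree) (hroot : ∀ k, tree (root k) = k)
    {p q : Fin n} (hpq : (p : ℕ) + 1 = q) (htree : tree p = tree q) :
    s(p, q) ∈ (pathForest hmono hroot).support := by
  by_cases h : p < root (tree p)
  · refine Or.inr ⟨p, ?_, ?_⟩
    · simp only [pathForest]
      omega
    · simp only [pathForest, dif_pos h]
      exact congrArg _ (Fin.ext hpq.symm)
  · refine Or.inr ⟨q, ?_, ?_⟩
    · simp only [pathForest, ← htree]
      omega
    · rw [Sym2.eq_swap]
      simp only [pathForest, ← htree]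
      rw [dif_neg (by omega)]
      exact congrArg _ (Fin.ext (by dsimp only; omega))

theorem exists_of_mem_support_pathForest {hmono : Monotone tree} {hroot : ∀ k, tree (root k) = k}
    {v : Sym2 (Fin n)} (hv : v ∈ (pathForest hmono hroot).support) :
    v.IsDiag ∨ ∃ p q : Fin n, (p : ℕ) + 1 = q ∧ v = s(p, q) := by
  refine hv.imp_right fun ⟨p, hp, hv⟩ => ?_
  simp only [pathForest] at hp hv
  split_ifs at hv with h
  · exact ⟨p, _, rfl, hv⟩
  · exact ⟨_, p, by dsimp only; omega, hv.trans Sym2.eq_swap⟩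

end PathForest

/-- There are `k` elements `q₁ < q₂ < ⋯ < q_k` of `C` in the interval `[a, b)` of alternating
parities, where `q₁` has the parity of `a`. -/
def HasAlternating (C : Set ℕ) (b : ℕ) : ℕ → ℕ → Prop
  | 0, _ => True
  | k + 1, a => ∃ q, a ≤ q ∧ q < b ∧ q % 2 = a % 2 ∧ q ∈ C ∧ HasAlternating C b k (q + 1)

-- Greedily: skip `a` if it lies in `C`, otherwise select it and continue at `a + 2`.
theorem exists_sparse_of_not_hasAlternating {C : Set ℕ} {a b k : ℕ} (hab : a ≤ b + 1)
    (h : ¬ HasAlternating C b k a) : ∃ P : Finset ℕ, (∀ j ∈ P, a ≤ j ∧ j < b ∧ j ∉ C) ∧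
      (∀ j ∈ P, j + 1 ∉ P) ∧ b + 1 ≤ a + 2 * P.card + k := by
  obtain _ | k := k
  · exact (h trivial).elim
  induction hd : b + 1 - a using Nat.strong_induction_on generalizing a k with
  | _ d ih =>
    subst hd
    obtain hba | hab := le_or_gt b a
    · exact ⟨∅, by simp, by simp, by simp only [Finset.card_empty]; omega⟩
    by_cases ha : a ∈ C
    · have h' : ¬ HasAlternating C b k (a + 1) := fun h' => h ⟨a, le_rfl, hab, rfl, ha, h'⟩
      obtain _ | k := k
      · exact (h' trivial).elim
      obtain ⟨P, hP, hsparse, hcard⟩ := ih _ (by omega) (by omega) k h' rfl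
      exact ⟨P, fun j hj => ⟨by have := hP j hj; omega, (hP j hj).2⟩, hsparse, by omega⟩
    · have h' : ¬ HasAlternating C b (k + 1) (a + 2) := fun ⟨q, haq, hqb, hpar, hq⟩ =>
        h ⟨q, by omega, hqb, by omega, hq⟩
      obtain ⟨P, hP, hsparse, hcard⟩ := ih _ (by omega) (by omega) k h' rfl
      have haP (i : ℕ) (hi : i < 2) : a + i ∉ P := fun hj => by
        have := hP _ hj
        omega
      refine ⟨insert a P, fun j hj => ?_, fun j hj hj' => ?_, ?_⟩
      · obtain rfl | hj := Finset.mem_insert.1 hj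
        · exact ⟨le_rfl, hab, ha⟩
        · exact ⟨by have := hP j hj; omega, (hP j hj).2⟩
      · rw [Finset.mem_insert] at hj hj'
        obtain rfl | hj := hj
        · exact hj'.elim (by omega) (haP 1 one_lt_two)
        · exact hj'.elim (by have := hP j hj; omega) (hsparse j hj)
      · rw [Finset.card_insert_of_notMem (show a ∉ P from haP 0 two_pos)]
        omega

namespace IsCyclicEnumeration

variable {n : ℕ} {c : ℕ → Fin n}

theorem exists_independent_of_not_hasAlternating (hc : IsCyclicEnumeration n c)
    {s : Finset (Sym2 (Fin n))} {a b k t : ℕ} (hab : a ≤ b + 1) (hba : b + 1 ≤ a + 2 * n)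
    (ht : 2 * t + a + k ≤ b + 2) (h : ¬ HasAlternating {j | vertex c j ∉ s} b k a) :
    ∃ N ⊆ s, ↑N ⊆ Dset n ∪ Uset n ∧ N.card = t ∧ ∀ v ∈ N, ∀ w ∈ N, ¬ GAdj n v w := by
  obtain ⟨P, hP, hsparse, hcard⟩ := exists_sparse_of_not_hasAlternating hab h
  obtain ⟨Q, hQP, hQ⟩ := Finset.exists_subset_card_eq (show t ≤ P.card by omega)
  have hwindow {i j : ℕ} (hi : a ≤ i ∧ i < a + 2 * n) (hj : a ≤ j ∧ j < a + 2 * n)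
      (hij : i ≡ j [MOD 2 * n]) : i = j := by
    have hsub : i - a ≡ j - a [MOD 2 * n] := Nat.ModEq.add_right_cancel' a (by
      rwa [Nat.sub_add_cancel hi.1, Nat.sub_add_cancel hj.1])
    have := hsub.eq_of_lt_of_lt (by omega) (by omega)
    omega
  have hmem {j : ℕ} (hj : j ∈ Q) : a ≤ j ∧ j + 1 < a + 2 * n := by
    have := hP j (hQP hj)
    omega
  have hsucc {i j : ℕ} (hi : i ∈ Q) (hj : j ∈ Q) : ¬ i + 1 ≡ j [MOD 2 * n] := fun h => by
    have := hmem hi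
    have := hmem hj
    have hij := hwindow (by omega) (by omega) h
    exact hsparse i (hQP hi) (hij ▸ hQP hj)
  refine ⟨Q.image (vertex c), ?_, ?_, ?_, ?_⟩
  · exact Finset.image_subset_iff.2 fun j hj => not_not.1 (hP j (hQP hj)).2.2
  · rw [Finset.coe_image]
    rintro _ ⟨j, -, rfl⟩
    exact hc.mem_iff_exists_vertex.2 ⟨j, rfl⟩
  · rw [← hQ]
    refine Finset.card_image_of_injOn fun i hi j hj hij => ?_
    have := hmem hi
    have := hmem hj
    exact hwindow (by omega) (by omega) (hc.vertex_eq_iff.1 hij)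
  · simp only [Finset.forall_mem_image]
    exact fun i hi j hj h => (hc.gAdj_vertex_iff.1 h).elim (hsucc hi hj) (hsucc hj hi)

end IsCyclicEnumeration

/-- Three positions `D k` in the cyclic interval of length `n`, separated by the ends `E k` of three
consecutive intervals `[0, E 0]`, `(E 0, E 1]`, `(E 1, E 2]` with `E 2 = n - 1`. -/
structure IsInterlaced (n : ℕ) (D E : Fin 3 → ℕ) : Prop where
  le : ∀ k, D k ≤ E k
  lt_one : E 0 < D 1
  lt_two : E 1 < D 2
  succ_eq : E 2 + 1 = n

-- After rotating an odd vertex outside `s` to the end, an alternating sequence of five vertices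
-- outside `s` is found before it.
theorem exists_independent_or_interlaced {n : ℕ} (hn : 3 ≤ n) (s : Finset (Sym2 (Fin n))) :
    (∃ N ⊆ s, ↑N ⊆ Dset n ∪ Uset n ∧ N.card = n - 2 ∧ ∀ v ∈ N, ∀ w ∈ N, ¬ GAdj n v w) ∨
      ∃ c, IsCyclicEnumeration n c ∧ ∃ D E, IsInterlaced n D E ∧
        ∀ k, vertex c (2 * D k) ∉ s ∧ vertex c (2 * E k + 1) ∉ s := by
  refine or_iff_not_imp_left.2 fun hN => ?_
  obtain ⟨c₀, hc₀⟩ := exists_isCyclicEnumeration hn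
  obtain ⟨q₀, -, -, hpar₀, hq₀, -⟩ : HasAlternating {j | vertex c₀ j ∉ s} (2 * n) 1 1 := by
    by_contra h
    exact hN (hc₀.exists_independent_of_not_hasAlternating (by omega) (by omega) (by omega) h)
  let c (p : ℕ) : Fin n := c₀ (p + (q₀ / 2 + 1))
  have hc : IsCyclicEnumeration n c := hc₀.rotate _
  obtain ⟨q₁, -, -, hpar₁, hs₁, q₂, hq₂, -, hpar₂, hs₂, q₃, hq₃, -, hpar₃, hs₃, q₄, hq₄, -,
      hpar₄, hs₄, q₅, hq₅, hn₅, hpar₅, hs₅, -⟩ :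
      HasAlternating {j | vertex c j ∉ s} (2 * n - 1) 5 0 := by
    by_contra h
    exact hN (hc.exists_independent_of_not_hasAlternating (by omega) (by omega) (by omega) h)
  have heven {q : ℕ} (hq : vertex c q ∉ s) (hpar : q % 2 = 0) : vertex c (2 * (q / 2)) ∉ s := by
    rwa [show 2 * (q / 2) = q by omega]
  have hodd {q : ℕ} (hq : vertex c q ∉ s) (hpar : q % 2 = 1) :
      vertex c (2 * (q / 2) + 1) ∉ s := by
    rwa [show 2 * (q / 2) + 1 = q by omega]
  have hlast : vertex c (2 * (n - 1) + 1) = vertex c₀ q₀ := by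
    rw [vertex_rotate, hc₀.vertex_eq_iff,
      show 2 * (n - 1) + 1 + 2 * (q₀ / 2 + 1) = q₀ + 2 * n by omega]
    exact Nat.add_modEq_right
  refine ⟨c, hc, ![q₁ / 2, q₃ / 2, q₅ / 2], ![q₂ / 2, q₄ / 2, n - 1], ⟨fun k => ?_,
    show q₂ / 2 < q₃ / 2 by omega, show q₄ / 2 < q₅ / 2 by omega, show n - 1 + 1 = n by omega⟩,
    fun k => ?_⟩
  · fin_cases k
    · exact show q₁ / 2 ≤ q₂ / 2 by omega
    · exact show q₃ / 2 ≤ q₄ / 2 by omega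
    · exact show q₅ / 2 ≤ n - 1 by omega
  · fin_cases k
    · exact ⟨heven hs₁ (by omega), hodd hs₂ (by omega)⟩
    · exact ⟨heven hs₃ (by omega), hodd hs₄ (by omega)⟩
    · exact ⟨heven hs₅ (by omega), hlast ▸ hq₀⟩

/-- The index of the interval among `[0, E 0]`, `(E 0, E 1]`, `(E 1, ∞)` that contains `p`. -/
def arc (E : Fin 3 → ℕ) (p : ℕ) : Fin 3 :=
  if p ≤ E 0 then 0 else if p ≤ E 1 then 1 else 2

theorem monotone_arc (E : Fin 3 → ℕ) : Monotone (arc E) := fun p q hpq => by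
  simp only [arc]
  split_ifs <;> omega

namespace IsInterlaced

variable {n : ℕ} {D E : Fin 3 → ℕ}

theorem arc_eq (h : IsInterlaced n D E) {p : ℕ} {k : Fin 3} (hDp : D k ≤ p) (hpE : p ≤ E k) :
    arc E p = k := by
  have h₁ := h.le 1
  have h₂ := h.lt_one
  have h₃ := h.lt_two
  obtain rfl | rfl | rfl : k = 0 ∨ k = 1 ∨ k = 2 := by omega
  all_goals
    simp only [arc]
    split_ifs <;> first | rfl | omega

theorem end_lt (h : IsInterlaced n D E) (k : Fin 3) : E k < n := by
  have h₁ := h.le 1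
  have h₂ := h.le 2
  have h₃ := h.lt_one
  have h₄ := h.lt_two
  have h₅ := h.succ_eq
  obtain rfl | rfl | rfl : k = 0 ∨ k = 1 ∨ k = 2 := by omega
  all_goals omega

theorem arc_succ_mod (h : IsInterlaced n D E) (k : Fin 3) : arc E ((E k + 1) % n) = k + 1 := by
  have h₁ := h.le 1
  have h₂ := h.le 2
  have h₃ := h.lt_one
  have h₄ := h.lt_two
  have h₅ := h.succ_eq
  obtain rfl | rfl | rfl : k = 0 ∨ k = 1 ∨ k = 2 := by omega
  · rw [Nat.mod_eq_of_lt (by omega), arc, if_neg (by omega), if_pos (by omega)]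
    rfl
  · rw [Nat.mod_eq_of_lt (by omega), arc, if_neg (by omega), if_neg (by omega)]
    rfl
  · rw [h₅, Nat.mod_self, arc, if_pos (Nat.zero_le _)]
    rfl

theorem arc_eq_or_eq_end (h : IsInterlaced n D E) {p : ℕ} (hp : p < n) :
    (p + 1 < n ∧ arc E p = arc E (p + 1)) ∨ ∃ k, p = E k := by
  by_contra! hne
  have h₀ := hne.2 0
  have h₁ := hne.2 1
  have h₂ := hne.2 2
  have h₃ := h.succ_eq
  refine hne.1 (by omega) ?_
  simp only [arc]
  split_ifs <;> first | rfl | omega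

theorem lt (h : IsInterlaced n D E) (k : Fin 3) : D k < n := (h.le k).trans_lt (h.end_lt k)

/-- The three paths on the positions `0, …, n - 1` cut out by the ends `E k`, rooted at the
positions `D k`. -/
def forest (h : IsInterlaced n D E) : RootedForest (Fin n) (Fin 3) :=
  pathForest (tree := fun p => arc E p) (root := fun k => ⟨D k, h.lt k⟩)
    ((monotone_arc E).comp Fin.val_strictMono.monotone) fun k => h.arc_eq le_rfl (h.le k)

/-- The positions of the six variables that complete the support of `IsInterlaced.forest` to all of
`Dset n ∪ Uset n`: the roots and the three edges of the cycle that link consecutive paths. -/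
def links (h : IsInterlaced n D E) : Set (Sym2 (Fin n)) :=
  Set.range (fun k => s(⟨D k, h.lt k⟩, ⟨D k, h.lt k⟩)) ∪ Set.range fun k =>
    s(⟨E k, h.end_lt k⟩, ⟨(E k + 1) % n, Nat.mod_lt _ (Nat.zero_lt_of_lt (h.lt k))⟩)

theorem isTransversal_links (h : IsInterlaced n D E) : h.forest.IsTransversal h.links :=
  h.forest.isTransversal_range_union_range (fun k => h.arc_eq (h.le k) le_rfl) h.arc_succ_mod

variable {c : ℕ → Fin n}

theorem mem_links (h : IsInterlaced n D E) (hc : IsCyclicEnumeration n c) {v : Sym2 (Fin n)}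
    (hv : v ∈ h.links) : ∃ k, v.map (fun p : Fin n => c p) = vertex c (2 * D k) ∨
      v.map (fun p : Fin n => c p) = vertex c (2 * E k + 1) := by
  obtain ⟨k, rfl⟩ | ⟨k, rfl⟩ := hv
  · exact ⟨k, Or.inl (vertex_two_mul c (D k)).symm⟩
  · refine ⟨k, Or.inr ?_⟩
    rw [vertex_two_mul_add_one, (hc.eq_iff (E k + 1) ((E k + 1) % n)).2 (Nat.mod_modEq _ n).symm]
    rfl

theorem mem_support_union_links_iff (h : IsInterlaced n D E) (hc : IsCyclicEnumeration n c)
    (v : Sym2 (Fin n)) :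
    v ∈ h.forest.support ∪ h.links ↔ v.map (fun p : Fin n => c p) ∈ Dset n ∪ Uset n := by
  refine ⟨?_, fun hv => ?_⟩
  · rintro (hv | hv)
    · obtain hv | ⟨p, q, hpq, rfl⟩ := exists_of_mem_support_pathForest hv
      · induction v with | _ p q
        obtain rfl : p = q := hv
        exact Or.inl ⟨c p, rfl⟩
      · exact Or.inr ((hc.mem_Uset_iff _).2 ⟨p, by rw [hpq]; rfl⟩)
    · obtain ⟨k, hk | hk⟩ := h.mem_links hc hv
      · exact hc.mem_iff_exists_vertex.2 ⟨_, hk⟩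
      · exact hc.mem_iff_exists_vertex.2 ⟨_, hk⟩
  · have hsucc {p q : Fin n} (hpq : (p : ℕ) + 1 ≡ q [MOD n]) :
        s(p, q) ∈ h.forest.support ∪ h.links := by
      have hq : (p + 1) % n = (q : ℕ) := Eq.trans hpq (Nat.mod_eq_of_lt q.2)
      obtain ⟨hp, harc⟩ | ⟨k, hk⟩ := h.arc_eq_or_eq_end p.2
      · rw [Nat.mod_eq_of_lt hp] at hq
        exact Or.inl (mk_mem_support_pathForest _ _ hq (hq ▸ harc))
      · rw [hk] at hq
        exact Or.inr (Or.inr ⟨k, congrArg₂ (fun a b => s(a, b)) (Fin.ext hk.symm) (Fin.ext hq)⟩)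
    induction v with | _ p q
    obtain hpq | hpq | hpq := hc.modEq_of_mk_mem hv
    · exact Or.inl (Or.inl (Fin.ext (hpq.eq_of_lt_of_lt p.2 q.2)))
    · exact hsucc hpq
    · exact Sym2.eq_swap ▸ hsucc hpq

end IsInterlaced

theorem exists_independent_subset_support {K : Type*} [Field K] {n : ℕ} (hn : 3 ≤ n)
    {rank : Sym2 (Fin n) → ℕ} (hrank : IsGoodRank n rank) {f : MvPolynomial (Sym2 (Fin n)) K}
    (hf : f ∈ minorsIdeal K n (n - 2)) {μ : Sym2 (Fin n) →₀ ℕ} (hμ : IsLeadingMonomial rank f μ) :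
    ∃ N ⊆ μ.support, ↑N ⊆ Dset n ∪ Uset n ∧ N.card = n - 2 ∧
      ∀ v ∈ N, ∀ w ∈ N, ¬ GAdj n v w := by
  refine (exists_independent_or_interlaced hn μ.support).resolve_right ?_
  rintro ⟨c, hc, D, E, h, hDE⟩
  obtain ⟨v, hv, hvμ⟩ := h.isTransversal_links.exists_mem_support_of_isLeadingMonomial
    (Equiv.ofBijective _ hc.bijective) (h.mem_support_union_links_iff hc) hrank
    (by rw [Fintype.card_fin]; omega) hf hμ
  obtain ⟨k, hk | hk⟩ := h.mem_links hc hv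
  · exact (hDE k).1 (hk ▸ hvμ)
  · exact (hDE k).2 (hk ▸ hvμ)

theorem prod_X_dvd_monomial {σ R : Type*} [CommSemiring R] {s : Finset σ} {μ : σ →₀ ℕ}
    (hs : s ⊆ μ.support) : ∏ v ∈ s, (X v : MvPolynomial σ R) ∣ monomial μ 1 := by
  rw [monomial_eq, C_1, one_mul, Finsupp.prod]
  exact (Finset.prod_dvd_prod_of_dvd _ _ fun v hv =>
    dvd_pow_self _ (Finsupp.mem_support_iff.1 (hs hv))).trans
      (Finset.prod_dvd_prod_of_subset _ _ _ hs)

/-- **Proposition 4.3.** For `n ≥ 4`, `in_≺(I_{n-2})` is generated by the squarefree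
monomials `∏_{v ∈ N} v`, where `N` runs over the `(n-2)`-element subsets of `D ∪ U`
containing no edge of the `2n`-cycle `G`. -/
theorem stmt13 {K : Type*} [Field K] (n : ℕ) (hn : 4 ≤ n)
    (rank : Sym2 (Fin n) → ℕ) (hrank : IsGoodRank n rank) :
    initialIdeal rank (minorsIdeal K n (n - 2)) =
      Ideal.span {p | ∃ N : Finset (Sym2 (Fin n)), ↑N ⊆ Dset n ∪ Uset n ∧
        N.card = n - 2 ∧ (∀ v ∈ N, ∀ w ∈ N, ¬ GAdj n v w) ∧
        p = ∏ v ∈ N, MvPolynomial.X v} := by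
  refine le_antisymm ?_ ?_
  · rw [initialIdeal, Ideal.span_le]
    rintro _ ⟨f, hf, -, μ, hμ, rfl⟩
    obtain ⟨N, hNμ, hN, hcard, hindep⟩ :=
      exists_independent_subset_support (by omega) hrank hf hμ
    exact Ideal.mem_of_dvd _ (prod_X_dvd_monomial hNμ)
      (Ideal.subset_span ⟨N, hN, hcard, hindep, rfl⟩)
  · obtain ⟨m, rfl⟩ : ∃ m, n = m + 2 := ⟨n - 2, by omega⟩
    rw [Ideal.span_le]
    rintro _ ⟨N, hN, hcard, hindep, rfl⟩
    exact prod_X_mem_initialIdeal (by omega) hrank hN hcard hindep
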